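/- arXiv:2409.02593 — 2 statements merged into one kernel-verified Lean document; each statement's English description precedes it below -/
import Mathlib

section
/- Let G be a k-connected graph (k ≥ 2) with n ≥ 3 vertices and e edges, minimum degree δ, and maximum degree Δ. If the first Zagreb index satisfies M₁(G) ≥ (n − k − 1)Δ² + (e(δ + n − k − 1))² / (4δ(n − k − 1)(k + 1)), then G is Hamiltonian or G is the complete bipartite graph K_{k, k+1}. -/
open Finset

/-- `G` is `k`-connected: more than `k` vertices, and deleting fewer than `k`
vertices leaves a connected graph. -/
def KConnected {V : Type*} [Fintype V] (k : ℕ) (G : SimpleGraph V) : Prop :=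
  k < Fintype.card V ∧
    ∀ S : Finset V, S.card < k → (G.induce ((↑S : Set V)ᶜ)).Connected

/-!
Suppose that `G` is not Hamiltonian. On a longest cycle `c`, the successors of the at least `k`
vertices attached to a component of `G - c`, together with a vertex of that component, form an
independent set `I` of size `k + 1` (Chvátal–Erdős; an adjacency among them would allow `c` to be
lengthened).

The degrees on `I` lie between `δ` and `|Iᶜ| = n - k - 1`, so the sum over `I` of the nonnegative
products `(d(v) - δ)(|Iᶜ| - d(v))` bounds `∑ v ∈ I, d(v)²` from above in terms of
`∑ v ∈ I, d(v) ≤ e`. With AM-GM and `d(v) ≤ Δ` off `I`, this gives exactly the reverse of the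
assumed inequality on `M₁(G)`, so equality holds throughout. Hence every edge meets `I` and every
vertex off `I` has degree `Δ`; counting edges from both sides, `G` is complete bipartite between
`I` and `Iᶜ`, where `|Iᶜ|` is `k` or `k + 1`. The balanced case is Hamiltonian, again by
Chvátal–Erdős.
-/

open SimpleGraph

section Connectivity

variable {V : Type*} [Fintype V] {G : SimpleGraph V} {k : ℕ}

theorem KConnected.le_card_of_separates (hG : KConnected k G) {A : Set V} {T : Finset V}
    (hAT : ∀ a ∈ A, ∀ b, G.Adj a b → b ∈ A ∨ b ∈ T) {v w : V} (hvA : v ∈ A) (hvT : v ∉ T)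
    (hwA : w ∉ A) (hwT : w ∉ T) : k ≤ #T := by
  by_contra! hlt
  obtain ⟨p⟩ := (hG.2 T hlt).preconnected ⟨v, by simpa⟩ ⟨w, by simpa⟩
  obtain ⟨d, -, hfst, hsnd⟩ := p.exists_boundary_dart (Subtype.val ⁻¹' A) hvA hwA
  exact (hAT _ hfst _ d.adj).elim hsnd fun h ↦ d.snd.2 h

theorem KConnected.le_degree [DecidableRel G.Adj] (hG : KConnected k G) (v : V) :
    k ≤ G.degree v := by
  classical
  by_contra! hlt
  obtain ⟨w, -, hw⟩ : ∃ w ∈ univ, w ∉ insert v (G.neighborFinset v) := by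
    refine exists_mem_notMem_of_card_lt_card ((card_insert_le _ _).trans_lt ?_)
    rw [card_neighborFinset_eq_degree, card_univ]
    exact hG.1.trans_le' hlt
  rw [mem_insert, not_or] at hw
  have := hG.le_card_of_separates (A := {v}) (T := G.neighborFinset v)
    (by simp +contextual) rfl (by simp) hw.1 hw.2
  rw [card_neighborFinset_eq_degree] at this
  omega

theorem KConnected.le_minDegree [Nonempty V] [DecidableRel G.Adj] (hG : KConnected k G) :
    k ≤ G.minDegree :=
  G.le_minDegree_of_forall_le_degree k hG.le_degree

theorem KConnected.connected (hG : KConnected k G) (hk : 0 < k) : G.Connected := by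
  have h := hG.2 ∅ (by simpa)
  rw [coe_empty, Set.compl_empty] at h
  exact (induceUnivIso G).connected_iff.mp h

theorem KConnected.not_isAcyclic (hG : KConnected k G) (hk : 2 ≤ k) : ¬ G.IsAcyclic := by
  classical
  intro hac
  have : Nontrivial V := Fintype.one_lt_card_iff_nontrivial.mp (by have := hG.1; omega)
  obtain ⟨v, hv⟩ := IsTree.exists_vert_degree_one_of_nontrivial ⟨hG.connected (by omega), hac⟩
  have := hG.le_degree v
  omega

end Connectivity

section IndependentSets

variable {V : Type*} {G : SimpleGraph V}

theorem exists_isNIndepSet_of_le_card {I : Finset V} (hI : G.IsIndepSet I) {n : ℕ}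
    (hn : n ≤ #I) : ∃ J, G.IsNIndepSet n J := by
  obtain ⟨J, hJI, hJ⟩ := exists_subset_card_eq hn
  exact ⟨J, Set.Pairwise.mono (mod_cast hJI) hI, hJ⟩

theorem exists_isNIndepSet_two_of_cliqueFree [Fintype V] {n : ℕ} (hG : G.CliqueFree n)
    (hn : n ≤ Fintype.card V) : ∃ I, G.IsNIndepSet 2 I := by
  classical
  obtain ⟨t, -, ht⟩ := exists_subset_card_eq (s := (univ : Finset V)) hn
  have ht' : ¬ G.IsClique t := fun h ↦ hG t ⟨h, ht⟩
  simp only [IsClique, Set.Pairwise, not_forall] at ht'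
  obtain ⟨x, -, y, -, hxy, hadj⟩ := ht'
  refine ⟨{x, y}, ?_, card_pair hxy⟩
  rw [coe_pair, IsIndepSet, Set.pairwise_pair]
  exact fun _ ↦ ⟨hadj, fun h ↦ hadj h.symm⟩

end IndependentSets

/-- The cyclic list of the vertices of a cycle of `G`. Compared with closed walks, no base point is
distinguished, which makes it easy to cut the cycle anywhere. -/
structure IsGraphCycle {V : Type*} (G : SimpleGraph V) (c : Cycle V) : Prop where
  nodup : c.Nodup
  three_le_length : 3 ≤ c.length
  chain : c.Chain G.Adj

/-- `q` lists the inner vertices of a path of `G` from `x` to `y` which is nontrivial and has no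
inner vertex on `c`. -/
structure IsDetour {V : Type*} (G : SimpleGraph V) (c : Cycle V) (x : V) (q : List V) (y : V) :
    Prop where
  ne_nil : q ≠ []
  nodup : q.Nodup
  notMem : ∀ z ∈ q, z ∉ c
  chain : (x :: (q ++ [y])).IsChain G.Adj

/-- The vertex set of the connected component of `v` in `G - c`; it is empty if `v` lies on `c`. -/
def componentOff {V : Type*} (G : SimpleGraph V) (c : Cycle V) (v : V) : Set V :=
  {h | ∃ p : G.Walk v h, ∀ z ∈ p.support, z ∉ c}

theorem formPerm_eq_of_eq_coe_cons {V : Type*} [DecidableEq V] {c : Cycle V} (hc : c.Nodup)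
    {x y : V} {m : List V} (h : c = ↑(x :: y :: m)) : c.formPerm hc x = y := by
  subst h
  rw [Cycle.formPerm_coe _ hc, List.formPerm_apply_head _ _ _ hc]

namespace IsGraphCycle

variable {V : Type*} {G : SimpleGraph V} {c : Cycle V}

theorem exists_eq_coe_cons_formPerm [DecidableEq V] (hc : IsGraphCycle G c) {x : V} (hx : x ∈ c) :
    ∃ m : List V, c = ↑(x :: c.formPerm hc.nodup x :: m) := by
  obtain ⟨y, m, rfl⟩ : ∃ y m, c = ↑(x :: y :: m) := by
    obtain ⟨l, rfl⟩ : ∃ l : List V, ↑l = c := Quot.exists_rep c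
    obtain ⟨s, t, rfl⟩ := List.append_of_mem (Cycle.mem_coe_iff.mp hx)
    have hrot : (↑(s ++ x :: t) : Cycle V) = ↑(x :: (t ++ s)) :=
      Cycle.coe_eq_coe.mpr List.isRotated_append
    have h3 := hc.three_le_length
    rw [hrot] at h3 ⊢
    rcases hts : t ++ s with _ | ⟨y, m⟩
    · rw [hts] at h3
      norm_num at h3
    · exact ⟨y, m, rfl⟩
  exact ⟨m, by rw [formPerm_eq_of_eq_coe_cons hc.nodup rfl]⟩

theorem exists_of_isCycle {v : V} {p : G.Walk v v} (hp : p.IsCycle) : ∃ c, IsGraphCycle G c := by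
  refine ⟨↑p.support.tail, hp.support_nodup, by simpa using hp.three_le_length, ?_⟩
  cases p with
  | nil => trivial
  | cons h q =>
    rw [Walk.support_cons, List.tail_cons, Cycle.chain_ne_nil _ q.support_ne_nil]
    simpa using (q.cons h).isChain_adj_support

theorem isHamiltonian [Fintype V] [DecidableEq V] (hc : IsGraphCycle G c) (hall : ∀ v, v ∈ c) :
    G.IsHamiltonian := by
  obtain ⟨l, rfl⟩ : ∃ l : List V, ↑l = c := Quot.exists_rep c
  obtain ⟨hnodup, h3, hchain⟩ := hc
  rw [Cycle.length_coe] at h3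
  have hl : l ≠ [] := List.length_pos_iff.mp (by omega)
  rw [Cycle.chain_ne_nil _ hl, List.isChain_cons] at hchain
  have hadj : G.Adj (l.getLast hl) (l.head hl) := hchain.1 _ (List.head_mem_head? hl)
  let p := Walk.ofSupport l hl hchain.2
  have hp : p.support = l := Walk.support_ofSupport hl hchain.2
  have hpath : p.IsPath := by rwa [Walk.isPath_def, hp]
  refine fun _ ↦ ⟨_, p.cons hadj, ?_⟩
  rw [Walk.isHamiltonianCycle_iff_isCycle_and_support_count_tail_eq_one, Walk.cons_isCycle_iff]
  refine ⟨⟨hpath, fun hmem ↦ ?_⟩, fun v ↦ ?_⟩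
  · have hlen := hpath.length_eq_one_of_mem_edges (Sym2.eq_swap ▸ hmem)
    rw [← hp, p.length_support] at h3
    omega
  · rw [Walk.support_cons, List.tail_cons, hp]
    exact List.count_eq_one_of_mem hnodup (hall v)

theorem exists_mem (hc : IsGraphCycle G c) : ∃ x, x ∈ c := by
  obtain ⟨l, rfl⟩ : ∃ l : List V, ↑l = c := Quot.exists_rep c
  exact List.exists_mem_of_length_pos (hc.three_le_length.trans_lt' (by simp))

theorem formPerm_mem [DecidableEq V] (hc : IsGraphCycle G c) {x : V} (hx : x ∈ c) :
    c.formPerm hc.nodup x ∈ c := by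
  rw [Cycle.formPerm_apply_mem_eq_next _ _ _ hx]
  exact Cycle.next_mem _ _ _ hx

theorem exists_maximalFor_length [Finite V] (h : ∃ c, IsGraphCycle G c) :
    ∃ c, MaximalFor (IsGraphCycle G) Cycle.length c := by
  classical
  have := Fintype.ofFinite V
  have hfin : {c | IsGraphCycle G c}.Finite :=
    (Set.finite_coe_iff.mp (inferInstanceAs (Finite {c : Cycle V // c.Nodup}))).subset
      fun c hc ↦ hc.nodup
  exact hfin.exists_maximalFor _ _ h

end IsGraphCycle

section LongestCycle

variable {V : Type*} {G : SimpleGraph V} {c : Cycle V} {v x y : V} {q : List V}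

theorem isChain_adj_reverse {l : List V} : l.reverse.IsChain G.Adj ↔ l.IsChain G.Adj := by
  simp only [List.isChain_reverse, G.adj_comm]

theorem IsDetour.symm (hq : IsDetour G c x q y) : IsDetour G c y q.reverse x where
  ne_nil := List.reverse_ne_nil_iff.mpr hq.ne_nil
  nodup := List.nodup_reverse.mpr hq.nodup
  notMem _ hz := hq.notMem _ (List.mem_reverse.mp hz)
  chain := by simpa using isChain_adj_reverse.mpr hq.chain

theorem mem_componentOff_of_adj {a b : V} (ha : a ∈ componentOff G c v) (hab : G.Adj a b)
    (hb : b ∉ c) : b ∈ componentOff G c v := by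
  obtain ⟨p, hp⟩ := ha
  refine ⟨p.concat hab, fun z hz ↦ ?_⟩
  rw [Walk.support_concat, List.mem_append, List.mem_singleton] at hz
  exact hz.elim (hp z) fun h ↦ h ▸ hb

theorem mem_componentOff_self (hv : v ∉ c) : v ∈ componentOff G c v :=
  ⟨Walk.nil, by simpa⟩

theorem notMem_of_mem_componentOff {a : V} (ha : a ∈ componentOff G c v) : a ∉ c :=
  let ⟨p, hp⟩ := ha
  hp a p.end_mem_support

theorem exists_isDetour {a b : V} (ha : a ∈ componentOff G c v) (hb : b ∈ componentOff G c v)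
    (hxa : G.Adj x a) (hyb : G.Adj y b) : ∃ q, IsDetour G c x q y := by
  classical
  obtain ⟨p, hp⟩ := ha
  obtain ⟨p', hp'⟩ := hb
  let r := (p.reverse.append p').bypass
  refine ⟨r.support, r.support_ne_nil, (Walk.bypass_isPath _).support_nodup, fun z hz ↦ ?_, ?_⟩
  · have := Walk.support_bypass_subset_support _ hz
    rw [Walk.mem_support_append_iff, Walk.support_reverse, List.mem_reverse] at this
    exact this.elim (hp z) (hp' z)
  · simpa using (Walk.cons hxa (r.concat hyb.symm)).isChain_adj_support

theorem IsDetour.not_chain_of_perm {l l' : List V} (hq : IsDetour G ↑l x q y)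
    (hl : MaximalFor (IsGraphCycle G) Cycle.length ↑l) (hperm : l'.Perm (q ++ l)) :
    ¬ Cycle.Chain G.Adj ↑l' := by
  intro hchain
  have hlen : Cycle.length (↑l : Cycle V) < Cycle.length (↑l' : Cycle V) := by
    rw [Cycle.length_coe, Cycle.length_coe, hperm.length_eq, List.length_append]
    exact Nat.lt_add_of_pos_left (List.length_pos_iff.mpr hq.ne_nil)
  have hnodup : (q ++ l).Nodup :=
    hq.nodup.append (Cycle.nodup_coe_iff.mp hl.prop.nodup) hq.notMem
  exact hl.not_prop_of_gt hlen
    ⟨hperm.nodup_iff.mpr hnodup, hl.prop.three_le_length.trans hlen.le, hchain⟩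

variable [DecidableEq V]

theorem not_isDetour_formPerm (hc : MaximalFor (IsGraphCycle G) Cycle.length c) (hx : x ∈ c) :
    ¬ IsDetour G c x q (c.formPerm hc.prop.nodup x) := by
  intro hq
  obtain ⟨m, hm⟩ := hc.prop.exists_eq_coe_cons_formPerm hx
  generalize c.formPerm hc.prop.nodup x = x' at hm hq
  subst hm
  have hchain := hc.prop.chain
  rw [Cycle.chain_coe_cons, List.cons_append, List.isChain_cons_cons] at hchain
  refine hq.not_chain_of_perm hc (l' := x :: (q ++ x' :: m)) List.perm_middle.symm ?_
  rw [Cycle.chain_coe_cons, List.append_assoc, List.cons_append, List.isChain_cons_split]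
  exact ⟨hq.chain, hchain.2⟩

theorem not_adj_formPerm_of_isDetour (hc : MaximalFor (IsGraphCycle G) Cycle.length c)
    (hx : x ∈ c) (hy : y ∈ c) (hq : IsDetour G c y q x) :
    ¬ G.Adj (c.formPerm hc.prop.nodup x) (c.formPerm hc.prop.nodup y) := by
  intro hadj
  have hxy : x ≠ y := by
    rintro rfl
    exact hadj.ne rfl
  have hσx : c.formPerm hc.prop.nodup x ≠ y := fun h ↦ not_isDetour_formPerm hc hx (h ▸ hq.symm)
  have hσy : c.formPerm hc.prop.nodup y ≠ x := fun h ↦ not_isDetour_formPerm hc hy (h ▸ hq)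
  obtain ⟨m, hm⟩ := hc.prop.exists_eq_coe_cons_formPerm hx
  generalize c.formPerm hc.prop.nodup x = x' at hm hadj hσx
  have hym : y ∈ m := by simpa [hm, hxy.symm, hσx.symm] using hy
  obtain ⟨a, b, rfl⟩ := List.append_of_mem hym
  have hrot : c = ↑(y :: (b ++ x :: x' :: a)) := by
    rw [hm, Cycle.coe_eq_coe]
    exact List.isRotated_append (l := x :: x' :: a) (l' := y :: b)
  obtain ⟨y', b, rfl⟩ : ∃ y' b', b = y' :: b' := by
    refine List.exists_cons_of_ne_nil ?_
    rintro rfl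
    exact hσy (formPerm_eq_of_eq_coe_cons _ hrot)
  rw [formPerm_eq_of_eq_coe_cons _ hrot] at hadj
  subst hm
  have hchain := hc.prop.chain
  rw [Cycle.chain_coe_cons, List.cons_append, List.isChain_cons_cons, List.append_assoc,
    List.cons_append, List.cons_append, List.isChain_cons_append_cons_cons] at hchain
  obtain ⟨-, hx'y, -, hy'x⟩ := hchain
  -- The longer cycle: along `c` from `x'` to `y`, the detour to `x`, and along `c` back to `y'`.
  refine hq.not_chain_of_perm hc (l' := x' :: (a ++ y :: (q ++ x :: (b.reverse ++ [y'])))) ?_ ?_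
  · refine List.perm_iff_count.mpr fun z ↦ ?_
    simp only [List.count_append, List.count_cons, List.count_reverse, List.count_nil]
    omega
  · have hxy' : (x :: (b.reverse ++ [y'])).IsChain G.Adj := by
      simpa using isChain_adj_reverse.mpr hy'x
    simp only [Cycle.chain_coe_cons, List.append_assoc, List.cons_append, List.nil_append]
    exact List.isChain_cons_split.mpr ⟨hx'y, List.isChain_cons_split.mpr ⟨hq.chain,
      List.isChain_cons_append_cons_cons.mpr ⟨hxy', hadj.symm, .singleton x'⟩⟩⟩

end LongestCycle

/-- The vertices of `c` with a neighbour in the component of `v` in `G - c`. -/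
def attachments {V : Type*} (G : SimpleGraph V) (c : Cycle V) (v : V) : Set V :=
  {x | x ∈ c ∧ ∃ a ∈ componentOff G c v, G.Adj x a}

section ChvatalErdos

variable {V : Type*} {G : SimpleGraph V} {c : Cycle V} {v x : V} {k : ℕ}

theorem formPerm_notMem_attachments [DecidableEq V]
    (hc : MaximalFor (IsGraphCycle G) Cycle.length c) (hx : x ∈ attachments G c v) :
    c.formPerm hc.prop.nodup x ∉ attachments G c v := by
  rintro ⟨-, b, hb, hσb⟩
  obtain ⟨hxc, a, ha, hxa⟩ := hx
  obtain ⟨q, hq⟩ := exists_isDetour ha hb hxa hσb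
  exact not_isDetour_formPerm hc hxc hq

theorem isIndepSet_insert_image_attachments [DecidableEq V]
    (hc : MaximalFor (IsGraphCycle G) Cycle.length c) (hv : v ∉ c) :
    G.IsIndepSet (insert v (c.formPerm hc.prop.nodup '' attachments G c v)) := by
  refine Set.pairwise_insert.mpr ⟨?_, ?_⟩
  · rintro _ ⟨x, ⟨hxc, a, ha, hxa⟩, rfl⟩ _ ⟨y, ⟨hyc, b, hb, hyb⟩, rfl⟩ -
    obtain ⟨q, hq⟩ := exists_isDetour hb ha hyb hxa
    exact not_adj_formPerm_of_isDetour hc hxc hyc hq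
  · rintro _ ⟨x, hx, rfl⟩ -
    have hadj : ¬ G.Adj v (c.formPerm hc.prop.nodup x) := fun h ↦
      formPerm_notMem_attachments hc hx
        ⟨hc.prop.formPerm_mem hx.1, v, mem_componentOff_self hv, h.symm⟩
    exact ⟨hadj, fun h ↦ hadj h.symm⟩

theorem KConnected.le_card_attachments [Fintype V] (hG : KConnected k G)
    (hc : MaximalFor (IsGraphCycle G) Cycle.length c) (hv : v ∉ c) :
    k ≤ (attachments G c v).ncard := by
  classical
  obtain ⟨w, hwc, hw⟩ : ∃ w ∈ c, w ∉ attachments G c v := by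
    obtain ⟨x, hx⟩ := hc.prop.exists_mem
    by_cases hxT : x ∈ attachments G c v
    · exact ⟨_, hc.prop.formPerm_mem hx, formPerm_notMem_attachments hc hxT⟩
    · exact ⟨x, hx, hxT⟩
  rw [Set.ncard_eq_toFinset_card']
  refine hG.le_card_of_separates (A := componentOff G c v) (fun a ha b hab ↦ ?_)
    (mem_componentOff_self hv) (fun h ↦ ?_) (fun h ↦ notMem_of_mem_componentOff h hwc)
    (fun h ↦ hw (Set.mem_toFinset.mp h))
  · by_cases hb : b ∈ c
    · exact .inr (Set.mem_toFinset.mpr ⟨hb, a, ha, hab.symm⟩)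
    · exact .inl (mem_componentOff_of_adj ha hab hb)
  · exact hv (Set.mem_toFinset.mp h).1

theorem exists_isNIndepSet_of_notMem [Fintype V] (hG : KConnected k G)
    (hc : MaximalFor (IsGraphCycle G) Cycle.length c) (hv : v ∉ c) :
    ∃ I, G.IsNIndepSet (k + 1) I := by
  classical
  have hvσ : v ∉ c.formPerm hc.prop.nodup '' attachments G c v := by
    rintro ⟨x, hx, rfl⟩
    exact hv (hc.prop.formPerm_mem hx.1)
  have hcard := Set.ncard_insert_of_notMem hvσ
  rw [Set.ncard_image_of_injective _ (Equiv.injective _)] at hcard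
  refine exists_isNIndepSet_of_le_card
    (I := (insert v (c.formPerm hc.prop.nodup '' attachments G c v)).toFinset) ?_ ?_
  · rw [Set.coe_toFinset]
    exact isIndepSet_insert_image_attachments hc hv
  · rw [← Set.ncard_eq_toFinset_card', hcard]
    exact Nat.succ_le_succ (hG.le_card_attachments hc hv)

theorem exists_isNIndepSet_of_not_isHamiltonian [Fintype V] [DecidableEq V]
    (hV : 3 ≤ Fintype.card V) (hG : KConnected k G) (hham : ¬ G.IsHamiltonian) :
    ∃ I, G.IsNIndepSet (k + 1) I := by
  by_cases hac : G.IsAcyclic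
  · obtain ⟨I, hI⟩ := exists_isNIndepSet_two_of_cliqueFree (hac.cliqueFree le_rfl) hV
    refine exists_isNIndepSet_of_le_card hI.isIndepSet ?_
    have hk : ¬ 2 ≤ k := fun hk ↦ hG.not_isAcyclic hk hac
    rw [hI.card_eq]
    omega
  · simp only [IsAcyclic, not_forall, not_not] at hac
    obtain ⟨_, p, hp⟩ := hac
    obtain ⟨c, hc⟩ := IsGraphCycle.exists_maximalFor_length (IsGraphCycle.exists_of_isCycle hp)
    obtain ⟨v, hv⟩ : ∃ v, v ∉ c := by
      by_contra! h
      exact hham (hc.prop.isHamiltonian h)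
    exact exists_isNIndepSet_of_notMem hG hc hv

end ChvatalErdos

section CompleteBetween

variable {V : Type*} [Fintype V] {G : SimpleGraph V} {s : Finset V} {k : ℕ}

theorem nonempty_iso_completeBipartiteGraph {t : Finset V} (hst : IsCompl s t)
    (hG : G.IsBipartiteWith s t) (h : G.IsCompleteBetween s t) :
    Nonempty (G ≃g completeBipartiteGraph (Fin #s) (Fin #t)) := by
  classical
  obtain rfl : sᶜ = t := hst.compl_eq
  let f : completeBipartiteGraph s {x // x ∉ s} ≃g G :=
    { Equiv.sumCompl (· ∈ s) with
      map_rel_iff' := by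
        rintro (⟨a, ha⟩ | ⟨a, ha⟩) (⟨b, hb⟩ | ⟨b, hb⟩)
        · simpa [ha, hb] using @hG.mem_of_adj a b
        · simpa using h ha (mem_compl.mpr hb)
        · simpa using (h hb (mem_compl.mpr ha)).symm
        · simpa [ha, hb] using @hG.mem_of_adj a b }
  exact ⟨f.symm.trans (completeBipartiteGraphCongr s.equivFin
    ((Equiv.subtypeEquivRight (by simp)).trans sᶜ.equivFin))⟩

variable [DecidableEq V]

theorem KConnected.of_isCompleteBetween_compl (h : G.IsCompleteBetween s (sᶜ : Finset V))
    (hk : 0 < k) (hs : k ≤ #s) (hsc : k ≤ #sᶜ) : KConnected k G := by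
  refine ⟨by have := card_add_card_compl s; omega, fun S hS ↦ ?_⟩
  obtain ⟨a, has, haS⟩ := exists_mem_notMem_of_card_lt_card (hS.trans_le hs)
  obtain ⟨b, hbs, hbS⟩ := exists_mem_notMem_of_card_lt_card (hS.trans_le hsc)
  let a' : ((S : Set V)ᶜ : Set V) := ⟨a, haS⟩
  let b' : ((S : Set V)ᶜ : Set V) := ⟨b, hbS⟩
  have hab : (G.induce (S : Set V)ᶜ).Adj a' b' := h has hbs
  refine connected_iff_exists_forall_reachable _ |>.mpr ⟨a', fun w ↦ ?_⟩
  by_cases hw : w.1 ∈ s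
  · have hwb : (G.induce (S : Set V)ᶜ).Adj w b' := h hw hbs
    exact hab.reachable.trans hwb.symm.reachable
  · exact Adj.reachable (h has (mem_compl.mpr hw))

theorem isHamiltonian_of_isCompleteBetween_compl (h : G.IsCompleteBetween s (sᶜ : Finset V))
    (hs : #s = #sᶜ) (hs2 : 2 ≤ #s) : G.IsHamiltonian := by
  by_contra hham
  have hconn : KConnected #s G := .of_isCompleteBetween_compl h (by omega) le_rfl hs.le
  obtain ⟨J, hJ⟩ := exists_isNIndepSet_of_not_isHamiltonian
    (by have := card_add_card_compl s; omega) hconn hham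
  obtain ⟨x, hxJ, hxs⟩ : ∃ x ∈ J, x ∉ s :=
    exists_mem_notMem_of_card_lt_card (by rw [hJ.card_eq]; omega)
  obtain ⟨y, hyJ, hys⟩ : ∃ y ∈ J, y ∉ sᶜ :=
    exists_mem_notMem_of_card_lt_card (by rw [hJ.card_eq]; omega)
  have hyx : G.Adj y x := h (notMem_compl.mp hys) (mem_compl.mpr hxs)
  exact hJ.isIndepSet hyJ hxJ hyx.ne hyx

end CompleteBetween

section DegreeSums

theorem isBipartiteWith_between_compl {V : Type*} [Fintype V] [DecidableEq V] (G : SimpleGraph V)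
    (I : Finset V) : (G.between I (Iᶜ : Finset V)).IsBipartiteWith I (Iᶜ : Finset V) :=
  between_isBipartiteWith (disjoint_coe.mpr disjoint_compl_right)

variable {V : Type*} [Fintype V] [DecidableEq V] {G : SimpleGraph V} [DecidableRel G.Adj]
  {I : Finset V}

theorem degree_between_compl_of_isIndepSet (hI : G.IsIndepSet I) {v : V} (hv : v ∈ I) :
    (G.between I (Iᶜ : Finset V)).degree v = G.degree v := by
  rw [← card_neighborFinset_eq_degree, ← card_neighborFinset_eq_degree]
  congr 1
  ext w
  have hw : G.Adj v w → w ∉ I := fun h hw ↦ hI hv hw h.ne h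
  simpa [between_adj, hv] using hw

theorem degree_le_card_compl_of_isIndepSet (hI : G.IsIndepSet I) {v : V} (hv : v ∈ I) :
    G.degree v ≤ #Iᶜ := by
  rw [← degree_between_compl_of_isIndepSet hI hv]
  exact isBipartiteWith_degree_le (isBipartiteWith_between_compl G I) hv

theorem sum_degree_eq_card_edgeFinset_between_compl (hI : G.IsIndepSet I) :
    ∑ v ∈ I, G.degree v = #(G.between I (Iᶜ : Finset V)).edgeFinset := by
  rw [← isBipartiteWith_sum_degrees_eq_card_edges (isBipartiteWith_between_compl G I)]
  exact sum_congr rfl fun v hv ↦ (degree_between_compl_of_isIndepSet hI hv).symm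

theorem compl_nonempty_of_isIndepSet (hI : G.IsIndepSet I) (hI0 : I.Nonempty)
    (hδ : 0 < G.minDegree) : Iᶜ.Nonempty := by
  obtain ⟨v, hv⟩ := hI0
  exact card_pos.mp <| hδ.trans_le <|
    (G.minDegree_le_degree v).trans (degree_le_card_compl_of_isIndepSet hI hv)

theorem isBipartiteWith_compl_of_sum_degree_eq (hI : G.IsIndepSet I)
    (h : ∑ v ∈ I, G.degree v = #G.edgeFinset) : G.IsBipartiteWith I (Iᶜ : Finset V) := by
  rw [sum_degree_eq_card_edgeFinset_between_compl hI] at h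
  have hG : G.between I (Iᶜ : Finset V) = G :=
    edgeFinset_inj.mp (eq_of_subset_of_card_le (edgeFinset_mono between_le) h.ge)
  exact hG ▸ isBipartiteWith_between_compl G I

end DegreeSums

section Zagreb

theorem sum_sq_add_card_mul_le {ι R : Type*} [CommRing R] [LinearOrder R] [IsStrictOrderedRing R]
    {t : Finset ι} {f : ι → R} {m M : R} (hm : ∀ i ∈ t, m ≤ f i) (hM : ∀ i ∈ t, f i ≤ M) :
    ∑ i ∈ t, f i ^ 2 + #t * (m * M) ≤ (m + M) * ∑ i ∈ t, f i := by
  rw [← nsmul_eq_mul, ← sum_const, ← sum_add_distrib, mul_sum]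
  refine sum_le_sum fun i hi ↦ ?_
  linarith [mul_nonneg (sub_nonneg.mpr (hm i hi)) (sub_nonneg.mpr (hM i hi))]

theorem eq_of_add_le_of_sq_div_le {R : Type*} [Field R] [LinearOrder R] [IsStrictOrderedRing R]
    {a b c : R} (hb : 0 < b) (habc : a + b ≤ c) (hcab : c ^ 2 / (4 * b) ≤ a) :
    a = b ∧ c = 2 * b := by
  have ha : 0 ≤ a := hcab.trans' (by positivity)
  rw [div_le_iff₀ (by positivity)] at hcab
  have hsq : (a + b) ^ 2 ≤ c ^ 2 := pow_le_pow_left₀ (by positivity) habc 2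
  have hab : a = b := by
    refine sub_eq_zero.mp (pow_eq_zero_iff two_ne_zero |>.mp (le_antisymm ?_ (sq_nonneg _)))
    linarith
  subst hab
  refine ⟨rfl, le_antisymm (le_of_sq_le_sq ?_ ?_) ?_⟩ <;> linarith

variable {V : Type*} [Fintype V] {G : SimpleGraph V} [DecidableRel G.Adj]

theorem sum_degree_le_card_edgeFinset {I : Finset V} (hI : G.IsIndepSet I) :
    ∑ v ∈ I, G.degree v ≤ #G.edgeFinset := by
  classical
  rw [sum_degree_eq_card_edgeFinset_between_compl hI]
  exact card_le_card (edgeFinset_mono between_le)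

theorem sum_sq_degree_le_card_mul (t : Finset V) :
    ∑ v ∈ t, G.degree v ^ 2 ≤ #t * G.maxDegree ^ 2 :=
  sum_le_card_nsmul _ _ _ fun v _ ↦ Nat.pow_le_pow_left (G.degree_le_maxDegree v) 2

theorem degree_eq_maxDegree_of_card_mul_le {t : Finset V}
    (h : #t * G.maxDegree ^ 2 ≤ ∑ v ∈ t, G.degree v ^ 2) {v : V} (hv : v ∈ t) :
    G.degree v = G.maxDegree := by
  have hle : ∀ w ∈ t, G.degree w ^ 2 ≤ G.maxDegree ^ 2 :=
    fun w _ ↦ Nat.pow_le_pow_left (G.degree_le_maxDegree w) 2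
  have hsum : ∑ w ∈ t, G.degree w ^ 2 = ∑ w ∈ t, G.maxDegree ^ 2 := by
    rw [sum_const, smul_eq_mul]
    exact (sum_sq_degree_le_card_mul t).antisymm h
  exact Nat.pow_left_injective two_ne_zero ((sum_eq_sum_iff_of_le hle).mp hsum v hv)

variable [DecidableEq V] {I : Finset V}

theorem sum_degree_eq_of_le_sum_sq_degree (hI : G.IsIndepSet I) (hI0 : I.Nonempty)
    (hδ : 0 < G.minDegree)
    (h : (#Iᶜ : ℝ) * G.maxDegree ^ 2 + (#G.edgeFinset * (G.minDegree + #Iᶜ)) ^ 2 /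
      (4 * G.minDegree * #Iᶜ * #I) ≤ ∑ v, (G.degree v : ℝ) ^ 2) :
    ∑ v ∈ I, G.degree v = #G.edgeFinset ∧ (∀ v ∈ Iᶜ, G.degree v = G.maxDegree) ∧
      #G.edgeFinset * (G.minDegree + #Iᶜ) = 2 * (#I * (G.minDegree * #Iᶜ)) := by
  have hs := hI0.card_pos
  have hN := (compl_nonempty_of_isIndepSet hI hI0 hδ).card_pos
  have hb : (0 : ℝ) < #I * (G.minDegree * #Iᶜ) := by positivity
  have hpoly := sum_sq_add_card_mul_le (t := I) (f := fun v ↦ (G.degree v : ℝ))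
    (m := G.minDegree) (M := #Iᶜ) (fun v _ ↦ mod_cast G.minDegree_le_degree v)
    (fun v hv ↦ mod_cast degree_le_card_compl_of_isIndepSet hI hv)
  have hedges : (G.minDegree + #Iᶜ) * ∑ v ∈ I, (G.degree v : ℝ) ≤
      #G.edgeFinset * (G.minDegree + #Iᶜ) := by
    rw [mul_comm]
    gcongr
    exact mod_cast sum_degree_le_card_edgeFinset hI
  have hcompl : ∑ v ∈ Iᶜ, (G.degree v : ℝ) ^ 2 ≤ #Iᶜ * G.maxDegree ^ 2 :=
    mod_cast sum_sq_degree_le_card_mul Iᶜ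
  rw [← sum_add_sum_compl I,
    show (4 * G.minDegree * #Iᶜ * #I : ℝ) = 4 * (#I * (G.minDegree * #Iᶜ)) by ring] at h
  obtain ⟨hsq, hdouble⟩ := eq_of_add_le_of_sq_div_le hb (hpoly.trans hedges) (by linarith)
  refine ⟨?_, fun v hv ↦ degree_eq_maxDegree_of_card_mul_le ?_ hv, mod_cast hdouble⟩
  · have hS : (G.minDegree + #Iᶜ) * ∑ v ∈ I, (G.degree v : ℝ) =
        (G.minDegree + #Iᶜ) * #G.edgeFinset := by linarith
    have := mul_left_cancel₀ (by positivity) hS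
    exact mod_cast this
  · have hle : ∑ v ∈ I, (G.degree v : ℝ) ^ 2 ≤
        (#G.edgeFinset * (G.minDegree + #Iᶜ)) ^ 2 / (4 * (#I * (G.minDegree * #Iᶜ))) := by
      rw [hsq, hdouble, le_div_iff₀ (by positivity)]
      exact le_of_eq (by ring)
    have : (#Iᶜ : ℝ) * G.maxDegree ^ 2 ≤ ∑ v ∈ Iᶜ, (G.degree v : ℝ) ^ 2 := by linarith
    exact mod_cast this

theorem maxDegree_eq_and_minDegree_eq_of_isBipartiteWith_compl
    (hG : G.IsBipartiteWith I (Iᶜ : Finset V)) (hδ : 0 < G.minDegree) (hI : #I ≤ G.minDegree + 1)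
    (hΔ : ∀ v ∈ Iᶜ, G.degree v = G.maxDegree) (hIc : Iᶜ.Nonempty)
    (h : #G.edgeFinset * (G.minDegree + #Iᶜ) = 2 * (#I * (G.minDegree * #Iᶜ))) :
    G.maxDegree = #I ∧ G.minDegree = #Iᶜ := by
  have hN := hIc.card_pos
  obtain ⟨w, hw⟩ := hIc
  have hδΔ := G.minDegree_le_maxDegree
  have hΔI : G.maxDegree ≤ #I := hΔ w hw ▸ isBipartiteWith_degree_le hG.symm hw
  have hedges : #G.edgeFinset = #Iᶜ * G.maxDegree := by
    rw [← isBipartiteWith_sum_degrees_eq_card_edges hG.symm, sum_congr rfl hΔ, sum_const,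
      smul_eq_mul]
  have hNI : #Iᶜ ≤ #I := by
    refine Nat.le_of_mul_le_mul_right ?_ (hδ.trans_le hδΔ)
    rw [← hedges, ← isBipartiteWith_sum_degrees_eq_card_edges hG, ← smul_eq_mul, ← sum_const]
    exact sum_le_sum fun v _ ↦ G.degree_le_maxDegree v
  have hkey : G.maxDegree * (G.minDegree + #Iᶜ) = 2 * (#I * G.minDegree) := by
    refine Nat.eq_of_mul_eq_mul_left hN ?_
    rw [← mul_assoc, ← hedges, h]
    ring
  rcases hΔI.eq_or_lt with hΔI | hlt
  · refine ⟨hΔI, ?_⟩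
    rw [hΔI, mul_left_comm, Nat.mul_right_inj (by omega)] at hkey
    omega
  · have hδΔ : G.minDegree = G.maxDegree := by omega
    rw [← hδΔ, ← mul_assoc, mul_comm, Nat.mul_left_inj (by omega)] at hkey
    omega

theorem isCompleteBetween_compl_of_degree_eq (hG : G.IsBipartiteWith I (Iᶜ : Finset V))
    (h : ∀ v ∈ Iᶜ, G.degree v = #I) : G.IsCompleteBetween I (Iᶜ : Finset V) := by
  intro u hu w hw
  have hN : G.neighborFinset w = I := eq_of_subset_of_card_le
    (isBipartiteWith_neighborFinset_subset hG.symm hw) (h w hw).ge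
  exact ((mem_neighborFinset ..).mp (hN ▸ mem_coe.mp hu)).symm

theorem isCompleteBetween_compl_of_le_sum_sq_degree (hI : G.IsIndepSet I) (hI0 : I.Nonempty)
    (hδ : 0 < G.minDegree) (hIδ : #I ≤ G.minDegree + 1)
    (h : (#Iᶜ : ℝ) * G.maxDegree ^ 2 + (#G.edgeFinset * (G.minDegree + #Iᶜ)) ^ 2 /
      (4 * G.minDegree * #Iᶜ * #I) ≤ ∑ v, (G.degree v : ℝ) ^ 2) :
    G.IsBipartiteWith I (Iᶜ : Finset V) ∧ G.IsCompleteBetween I (Iᶜ : Finset V) ∧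
      G.maxDegree = #I ∧ G.minDegree = #Iᶜ := by
  obtain ⟨hedges, hdeg, hdouble⟩ := sum_degree_eq_of_le_sum_sq_degree hI hI0 hδ h
  have hbip := isBipartiteWith_compl_of_sum_degree_eq hI hedges
  have hIc := compl_nonempty_of_isIndepSet hI hI0 hδ
  obtain ⟨hmax, hmin⟩ :=
    maxDegree_eq_and_minDegree_eq_of_isBipartiteWith_compl hbip hδ hIδ hdeg hIc hdouble
  exact ⟨hbip, isCompleteBetween_compl_of_degree_eq hbip fun v hv ↦ (hdeg v hv).trans hmax,
    hmax, hmin⟩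

end Zagreb

theorem zagreb_hamiltonian_general {V : Type*} [Fintype V] [DecidableEq V]
    (G : SimpleGraph V) [DecidableRel G.Adj]
    (k n e δ Δ : ℕ) (hk : 1 ≤ k) (hconn : KConnected k G)
    (hn : n = Fintype.card V) (hn3 : 3 ≤ n) (he : e = G.edgeFinset.card)
    (hδ : δ = G.minDegree) (hΔ : Δ = G.maxDegree)
    (hM : ((∑ v, (G.degree v) ^ 2 : ℕ) : ℝ) ≥
      ((n : ℝ) - k - 1) * Δ ^ 2 +
        ((e : ℝ) * ((δ : ℝ) + n - k - 1)) ^ 2 / (4 * δ * ((n : ℝ) - k - 1) * (k + 1))) :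
    G.IsHamiltonian ∨ Nonempty (G ≃g completeBipartiteGraph (Fin k) (Fin (k + 1))) := by
  subst hn he hδ hΔ
  refine or_iff_not_imp_left.mpr fun hham ↦ ?_
  obtain ⟨I, hI, hIcard⟩ := exists_isNIndepSet_of_not_isHamiltonian hn3 hconn hham
  have hI0 : I.Nonempty := card_pos.mp (by omega)
  have : Nonempty V := hI0.to_type
  have hkδ : k ≤ G.minDegree := hconn.le_minDegree
  have hIk : (k : ℝ) + 1 = #I := by rw [hIcard]; push_cast; rfl
  have hN : (Fintype.card V : ℝ) - k - 1 = #Iᶜ := by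
    rw [sub_sub, hIk, ← card_add_card_compl I, Nat.cast_add, add_sub_cancel_left]
  have hδN : (G.minDegree : ℝ) + Fintype.card V - k - 1 = G.minDegree + #Iᶜ := by linarith
  rw [hN, hδN, hIk, Nat.cast_sum] at hM
  obtain ⟨hbip, hcomplete, hΔ, hδ⟩ := isCompleteBetween_compl_of_le_sum_sq_degree hI hI0
    (hk.trans hkδ) (by omega) (by simpa using hM)
  have := G.minDegree_le_maxDegree
  obtain hIc | hIc : #Iᶜ = k ∨ #I = #Iᶜ := by omega
  · rw [← hIcard, ← hIc]
    exact nonempty_iso_completeBipartiteGraph isCompl_compl.symm hbip.symm hcomplete.symm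
  · exact absurd (isHamiltonian_of_isCompleteBetween_compl hcomplete hIc (by omega)) hham

theorem zagreb_hamiltonian
    {V : Type*} [Fintype V] [DecidableEq V] [Nonempty V]
    (G : SimpleGraph V) [DecidableRel G.Adj]
    (k n e δ Δ : ℕ) (hk : 2 ≤ k) (hconn : KConnected k G)
    (hn : n = Fintype.card V) (hn3 : 3 ≤ n) (he : e = G.edgeFinset.card)
    (hδ : δ = G.minDegree) (hΔ : Δ = G.maxDegree)
    (hM : ((∑ v, (G.degree v) ^ 2 : ℕ) : ℝ) ≥
      ((n : ℝ) - k - 1) * Δ ^ 2 +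
        ((e : ℝ) * ((δ : ℝ) + n - k - 1)) ^ 2 / (4 * δ * ((n : ℝ) - k - 1) * (k + 1))) :
    G.IsHamiltonian ∨ Nonempty (G ≃g completeBipartiteGraph (Fin k) (Fin (k + 1))) :=
  zagreb_hamiltonian_general G k n e δ Δ (one_le_two.trans hk) hconn hn hn3 he hδ hΔ hM
end

section
/- Let G be a 2-connected bipartite graph with bipartition (A, B), |A| ≥ |B|, such that every vertex in A has degree at least s and every vertex in B has degree at least t. Then G contains a cycle of length at least 2·min(|B|, s + t − 1, 2s − 2). -/
open Finset

/-!
Close up a longest path. Suppose first that one of its ends lies in `A`. Chords from the two ends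
that cross at distance at most two give a cycle missing at most one vertex of the path. Otherwise,
closest crossing chords, or two disjoint paths bridging the gap if no chords cross, give a cycle
which, with one exception each, contains the path predecessors of the neighbours of the first end,
the neighbours of the last end, and their path successors. The predecessors of the neighbours of an
end in `A` lie in `A`, and so do the neighbours of a last end outside `A`, respectively the
successors of the neighbours of a last end in `A`. As no chords cross closely, the two sets are
disjoint up to the exceptions, so the degrees of the ends bound half the length of the cycle.

If a cycle missing at most one vertex of a longest path does not cover the complement of `A`, then
it extends to a longest path with both ends outside `A`. More than half of the vertices of such a
path are outside `A`, so some component off the path has more than half of its vertices in `A`.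
Depth-first search in this component, from the first place where it is attached to the path, ends at
a vertex `a ∈ A` all of whose neighbours have been visited or lie on the path after the attachment.
The path from `a` through the attachment to the last end of the longest path can then be closed up
like before, unless that end has a neighbour before the attachment; in that case the chord to the
first such neighbour closes a cycle that is long by the same count.
-/

/-- `S` is the vertex set of a path of `G` from `x` to `y`. -/
def PathOn {V : Type*} (G : SimpleGraph V) (S : Finset V) (x y : V) : Prop :=
  ∃ p : G.Walk x y, p.IsPath ∧ ∀ v, v ∈ S ↔ v ∈ p.support

/-- `C` is the vertex set of a cycle of `G`. -/
def CycleOn {V : Type*} (G : SimpleGraph V) (C : Finset V) : Prop :=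
  ∃ (u : V) (c : G.Walk u u), c.IsCycle ∧ ∀ v, v ∈ C ↔ v ∈ c.support

section Paths

variable {V : Type*} {G : SimpleGraph V} {S T C : Finset V} {u v w x y z : V}

namespace PathOn

theorem single (x : V) : PathOn G {x} x x :=
  ⟨.nil, .nil, by simp⟩

theorem left_mem (h : PathOn G S x y) : x ∈ S := by
  obtain ⟨p, -, hS⟩ := h
  simp [hS]

theorem symm (h : PathOn G S x y) : PathOn G S y x := by
  obtain ⟨p, hp, hS⟩ := h
  exact ⟨p.reverse, hp.reverse, by simpa using hS⟩

theorem right_mem (h : PathOn G S x y) : y ∈ S :=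
  h.symm.left_mem

theorem exists_adj_boundary (h : PathOn G S x y) (hx : x ∉ C) (hy : y ∈ C) :
    ∃ u ∈ S, ∃ v ∈ S, u ∉ C ∧ v ∈ C ∧ G.Adj u v := by
  obtain ⟨p, -, hS⟩ := h
  obtain ⟨d, hd, hu, hv⟩ := p.exists_boundary_dart {v | v ∉ C} (by simpa) (by simpa)
  exact ⟨d.fst, (hS _).2 (p.dart_fst_mem_support_of_mem_darts hd),
    d.snd, (hS _).2 (p.dart_snd_mem_support_of_mem_darts hd), hu, by simpa using hv, d.adj⟩

theorem exists_of_preconnected (h : G.Preconnected) (x y : V) : ∃ S, PathOn G S x y := by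
  classical
  obtain ⟨p, hp⟩ := (h x y).exists_isPath
  exact ⟨p.support.toFinset, p, hp, fun _ => List.mem_toFinset⟩

theorem exists_of_preconnected_induce {s : Set V} (h : (G.induce s).Preconnected)
    (hx : x ∈ s) (hy : y ∈ s) : ∃ S, PathOn G S x y ∧ ↑S ⊆ s := by
  classical
  obtain ⟨p, hp⟩ := (h ⟨x, hx⟩ ⟨y, hy⟩).exists_isPath
  let f := SimpleGraph.Embedding.induce (G := G) s
  have hfp : (p.map f.toHom).IsPath :=
    (SimpleGraph.Walk.isPath_map_iff_of_injective f.injective).2 hp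
  refine ⟨(p.map f.toHom).support.toFinset,
    ⟨p.map f.toHom, hfp, fun _ => List.mem_toFinset⟩, ?_⟩
  intro v hv
  obtain ⟨a, -, rfl⟩ : ∃ a ∈ p.support, f a = v := by simpa using hv
  exact a.2

section DecidableEq

variable [DecidableEq V]

theorem cons (h : PathOn G S y z) (hxy : G.Adj x y) (hx : x ∉ S) : PathOn G (insert x S) x z := by
  obtain ⟨p, hp, hS⟩ := h
  exact ⟨.cons hxy p, hp.cons (by simpa [hS] using hx), by simp [hS]⟩

theorem append (hS : PathOn G S x y) (hT : PathOn G T y z) (hST : ∀ v ∈ S, v ∈ T → v = y) :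
    PathOn G (S ∪ T) x z := by
  obtain ⟨p, hp, hpS⟩ := hS
  obtain ⟨q, hq, hqT⟩ := hT
  have hdisj : List.Disjoint p.support q.support.tail := fun v hvp hvq => by
    have hvy := hST v ((hpS v).2 hvp) ((hqT v).2 (List.mem_of_mem_tail hvq))
    have hnodup := hq.support_nodup
    rw [← q.cons_tail_support, List.nodup_cons] at hnodup
    exact hnodup.1 (hvy ▸ hvq)
  refine ⟨p.append q, ?_, by simp [hpS, hqT]⟩
  rw [SimpleGraph.Walk.isPath_def, SimpleGraph.Walk.support_append, List.nodup_append']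
  exact ⟨hp.support_nodup, hq.support_nodup.tail, hdisj⟩

theorem append_adj (hS : PathOn G S x y) (hT : PathOn G T z w) (hyz : G.Adj y z)
    (hST : Disjoint S T) : PathOn G (S ∪ T) x w := by
  have hy := hS.right_mem
  rw [disjoint_left] at hST
  have h := hS.append (hT.cons hyz (hST hy)) (by grind)
  rwa [show S ∪ insert y T = S ∪ T by grind] at h

theorem snoc (h : PathOn G S x y) (hyz : G.Adj y z) (hz : z ∉ S) : PathOn G (insert z S) x z :=
  (h.symm.cons hyz.symm hz).symm

theorem exists_split (h : PathOn G S x y) (hz : z ∈ S) :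
    ∃ S₁ S₂, PathOn G S₁ x z ∧ PathOn G S₂ z y ∧ S₁ ∪ S₂ = S ∧ ∀ v ∈ S₁, v ∈ S₂ → v = z := by
  obtain ⟨p, hp, hS⟩ := h
  obtain ⟨q, r, hq, hr, rfl⟩ := hp.mem_support_iff_exists_append.1 ((hS z).1 hz)
  refine ⟨q.support.toFinset, r.support.toFinset, ⟨q, hq, by simp⟩, ⟨r, hr, by simp⟩,
    by ext v; simp [hS], fun v hvq hvr => ?_⟩
  by_contra hvz
  exact hp.ne_of_mem_support_of_append hvz (List.mem_toFinset.1 hvq) (List.mem_toFinset.1 hvr) rfl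

theorem exists_uncons (h : PathOn G S x y) (hxy : x ≠ y) :
    ∃ T z, PathOn G T z y ∧ G.Adj x z ∧ x ∉ T ∧ insert x T = S := by
  obtain ⟨p, hp, hS⟩ := h
  cases p with
  | nil => exact absurd rfl hxy
  | cons hadj p =>
    rw [SimpleGraph.Walk.cons_isPath_iff] at hp
    exact ⟨p.support.toFinset, _, ⟨p, hp.1, by simp⟩, hadj, by simpa using hp.2,
      by ext v; simp [hS]⟩

@[elab_as_elim]
theorem induction {y : V} {motive : ∀ S x, PathOn G S x y → Prop}
    (single : motive {y} y (PathOn.single y))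
    (cons : ∀ {S x z} (h : PathOn G S z y) (hxz : G.Adj x z) (hx : x ∉ S), motive S z h →
      motive (insert x S) x (h.cons hxz hx))
    (h : PathOn G S x y) : motive S x h := by
  obtain ⟨p, hp, hS⟩ := id h
  obtain rfl : S = p.support.toFinset := by ext v; simp [hS]
  clear hS
  induction p with
  | nil => simpa using single
  | cons hxz p ih =>
    rw [SimpleGraph.Walk.cons_isPath_iff] at hp
    have hcons := cons ⟨p, hp.1, fun v => List.mem_toFinset⟩ hxz (by simpa using hp.2)
      (ih single cons hp.1 ⟨p, hp.1, fun v => List.mem_toFinset⟩)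
    simpa using hcons

end DecidableEq

theorem exists_first_mem {Y : Finset V} (h : PathOn G S x y) (hy : y ∈ Y) :
    ∃ T ⊆ S, ∃ z ∈ Y, PathOn G T x z ∧ ∀ v ∈ T, v ∈ Y → v = z := by
  classical
  induction h using PathOn.induction with
  | single => exact ⟨{y}, subset_rfl, y, hy, single y, by simp⟩
  | @cons S x w _ hxw hx ih =>
    by_cases hxY : x ∈ Y
    · exact ⟨{x}, by simp, x, hxY, single x, by simp⟩
    obtain ⟨T, hTS, z, hz, hT, hTY⟩ := ih
    exact ⟨insert x T, insert_subset_insert x hTS, z, hz, hT.cons hxw fun hxT => hx (hTS hxT),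
      by grind⟩

end PathOn

end Paths

section Cycles

variable {V : Type*} {G : SimpleGraph V} {S T C : Finset V} {u v w x y z : V}

theorem mem_tail_support_iff_of_not_nil {c : G.Walk u u} (hc : ¬c.Nil) :
    v ∈ c.support.tail ↔ v ∈ c.support := by
  have := c.end_mem_tail_support hc
  grind [SimpleGraph.Walk.cons_tail_support]

namespace CycleOn

theorem exists_walk (h : CycleOn G C) :
    ∃ (u : V) (c : G.Walk u u), c.IsCycle ∧ c.length = #C := by
  classical
  obtain ⟨u, c, hc, hC⟩ := h
  have hCc : C = c.support.tail.toFinset := by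
    ext v
    rw [hC, List.mem_toFinset, mem_tail_support_iff_of_not_nil hc.not_nil]
  exact ⟨u, c, hc, by rw [hCc, List.toFinset_card_of_nodup hc.support_nodup]; simp⟩

theorem three_le_card (h : CycleOn G C) : 3 ≤ #C := by
  obtain ⟨u, c, hc, hC⟩ := h.exists_walk
  exact hC ▸ hc.three_le_length

theorem exists_open (h : CycleOn G C) (hv : v ∈ C) : ∃ w, PathOn G C w v ∧ G.Adj v w := by
  classical
  obtain ⟨u, c, hc, hC⟩ := h
  have hv : v ∈ c.support := (hC v).1 hv
  have hr : (c.rotate v hv).IsCycle := hc.rotate hv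
  refine ⟨_, ⟨_, hr.isPath_tail, fun w => ?_⟩, (c.rotate v hv).adj_snd hr.not_nil⟩
  rw [hC, SimpleGraph.Walk.support_tail_of_not_nil _ hr.not_nil,
    mem_tail_support_iff_of_not_nil hr.not_nil, SimpleGraph.Walk.mem_support_rotate_iff]

end CycleOn

namespace PathOn

theorem cycleOn_of_adj (h : PathOn G S x y) (hyx : G.Adj y x) (hS : 3 ≤ #S) : CycleOn G S := by
  classical
  obtain ⟨p, hp, hpS⟩ := h
  have hSp : S = p.support.toFinset := by ext v; simp [hpS]
  rw [hSp, List.toFinset_card_of_nodup hp.support_nodup, p.length_support] at hS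
  refine ⟨y, .cons hyx p, ?_, fun v => ?_⟩
  · rw [SimpleGraph.Walk.isCycle_iff_isPath_tail_and_le_length]
    exact ⟨by simpa using hp, by simpa using hS⟩
  · have := p.end_mem_support
    grind [SimpleGraph.Walk.support_cons]

theorem cycleOn_union [DecidableEq V] (hS : PathOn G S x y) (hT : PathOn G T x y) (hxy : x ≠ y)
    (hST : ∀ v ∈ S, v ∈ T → v = x ∨ v = y) (hcard : 3 ≤ #(S ∪ T)) : CycleOn G (S ∪ T) := by
  obtain ⟨T', z, hT', hxz, hxT', rfl⟩ := hT.exists_uncons hxy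
  have hx := hS.left_mem
  rw [show S ∪ insert x T' = S ∪ T' by grind] at hcard ⊢
  exact (hS.append hT'.symm (by grind)).cycleOn_of_adj hxz.symm hcard

end PathOn

end Cycles

theorem mem_iff_notMem_of_adj {V : Type*} {G : SimpleGraph V} {A : Finset V} {x y : V}
    (hG : G.IsBipartiteWith ↑A (↑A)ᶜ) (h : G.Adj x y) : x ∈ A ↔ y ∉ A := by
  have := hG.mem_of_adj h
  simp only [mem_coe, Set.mem_compl_iff] at this
  tauto

section Excess

variable {V : Type*} [DecidableEq V] {A S T : Finset V} {x y : V}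

/-- The signed count of `S` relative to `A`: the number of vertices of `S` in `A` minus the number
outside. -/
def excess (A S : Finset V) : ℤ :=
  #(S ∩ A) - #(S \ A)

theorem excess_empty : excess A ∅ = 0 := by
  simp [excess]

theorem nonempty_of_excess_pos (h : 0 < excess A S) : S.Nonempty := by
  rw [nonempty_iff_ne_empty]
  rintro rfl
  exact h.ne' excess_empty

theorem excess_union (h : Disjoint S T) : excess A (S ∪ T) = excess A S + excess A T := by
  simp only [excess, union_inter_distrib_right, union_sdiff_distrib]
  rw [card_union_of_disjoint (h.mono inter_subset_left inter_subset_left),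
    card_union_of_disjoint (h.mono sdiff_subset sdiff_subset)]
  push_cast
  ring

theorem excess_insert (h : x ∉ S) : excess A (insert x S) = excess A {x} + excess A S := by
  rw [insert_eq, excess_union (by simpa using h)]

theorem excess_singleton : excess A {x} = if x ∈ A then 1 else -1 := by
  by_cases h : x ∈ A
  · simp [excess, h, inter_eq_left.2, sdiff_eq_empty_iff_subset.2]
  · simp [excess, h, singleton_inter_of_notMem, sdiff_eq_self_of_disjoint]

theorem card_add_excess : (#S : ℤ) + excess A S = 2 * #(S ∩ A) := by
  rw [excess, ← card_inter_add_card_sdiff S A]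
  push_cast
  ring

variable {G : SimpleGraph V}

theorem PathOn.two_mul_excess (hG : G.IsBipartiteWith ↑A (↑A)ᶜ) (h : PathOn G S x y) :
    2 * excess A S = excess A {x} + excess A {y} := by
  induction h using PathOn.induction with
  | single => ring
  | @cons S x z _ hxz hx ih =>
    have := mem_iff_notMem_of_adj hG hxz
    rw [excess_insert hx, mul_add, ih]
    simp only [excess_singleton]
    grind

theorem PathOn.card_le (hG : G.IsBipartiteWith ↑A (↑A)ᶜ) (h : PathOn G S x y) :
    #S ≤ 2 * #(S ∩ A) + 1 := by
  have hex := h.two_mul_excess hG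
  have hcard := card_add_excess (A := A) (S := S)
  simp only [excess_singleton] at hex
  grind

theorem PathOn.two_mul_card_sdiff_le (hG : G.IsBipartiteWith ↑A (↑A)ᶜ) (h : PathOn G S x y)
    (hx : x ∈ A) : 2 * #(S \ A) ≤ #S := by
  have hex := h.two_mul_excess hG
  have hcard := card_inter_add_card_sdiff S A
  simp only [excess_singleton] at hex
  rw [excess] at hex
  grind

theorem CycleOn.card_eq (hG : G.IsBipartiteWith ↑A (↑A)ᶜ) (h : CycleOn G S) :
    #S = 2 * #(S ∩ A) := by
  obtain ⟨u, c, -, hS⟩ := id h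
  obtain ⟨w, hw, hvw⟩ := h.exists_open ((hS u).2 c.start_mem_support)
  have hex := hw.two_mul_excess hG
  have := mem_iff_notMem_of_adj hG hvw
  have hcard := card_add_excess (A := A) (S := S)
  simp only [excess_singleton] at hex
  grind

end Excess

theorem PathOn.mem_iff_mem_of_odd_card {V : Type*} {G : SimpleGraph V} {A S : Finset V} {x y : V}
    (hG : G.IsBipartiteWith ↑A (↑A)ᶜ) (h : PathOn G S x y) (hS : Odd #S) : x ∈ A ↔ y ∈ A := by
  classical
  have hex := h.two_mul_excess hG
  have hcard := card_add_excess (A := A) (S := S)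
  simp only [excess_singleton] at hex
  grind

section PathSeq

variable {V : Type*} {G : SimpleGraph V} {p : ℕ → V} {n i j k : ℕ}

/-- The vertices `p 0, …, p n` form a path of `G` in this order; the values of `p` beyond `n` are
irrelevant. -/
structure IsPathSeq {V : Type*} (G : SimpleGraph V) (p : ℕ → V) (n : ℕ) : Prop where
  adj : ∀ i < n, G.Adj (p i) (p (i + 1))
  injOn : Set.InjOn p (Set.Iic n)

theorem IsPathSeq.card_add_card_le {C : Finset V} {I J : Finset ℕ} (h : IsPathSeq G p n)
    (hIJ : Disjoint I J) (hI : ∀ k ∈ I, k ≤ n ∧ p k ∈ C) (hJ : ∀ k ∈ J, k ≤ n ∧ p k ∈ C) :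
    #I + #J ≤ #C := by
  have hmem : ∀ k ∈ I ∪ J, k ≤ n ∧ p k ∈ C := fun k hk => (mem_union.1 hk).elim (hI k) (hJ k)
  rw [← card_union_of_disjoint hIJ]
  exact card_le_card_of_injOn p (fun k hk => (hmem k hk).2) (h.injOn.mono fun k hk => (hmem k hk).1)

/-- The set of vertices `p i, …, p j`. -/
def seg {V : Type*} [DecidableEq V] (p : ℕ → V) (i j : ℕ) : Finset V :=
  (Icc i j).image p

variable [DecidableEq V]

theorem mem_seg {v : V} : v ∈ seg p i j ↔ ∃ k, i ≤ k ∧ k ≤ j ∧ p k = v := by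
  simp [seg, and_assoc]

theorem PathOn.exists_isPathSeq {S : Finset V} {x y : V} (h : PathOn G S x y) :
    ∃ p n, IsPathSeq G p n ∧ p 0 = x ∧ p n = y ∧ seg p 0 n = S := by
  obtain ⟨w, hw, hS⟩ := h
  refine ⟨w.getVert, w.length, ⟨fun i hi => w.adj_getVert_succ hi, hw.getVert_injOn⟩,
    w.getVert_zero, w.getVert_length, ?_⟩
  ext v
  rw [mem_seg, hS, SimpleGraph.Walk.mem_support_iff_exists_getVert]
  grind

namespace IsPathSeq

theorem mem_seg_iff (h : IsPathSeq G p n) (hj : j ≤ n) (hk : k ≤ n) :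
    p k ∈ seg p i j ↔ i ≤ k ∧ k ≤ j := by
  rw [mem_seg]
  refine ⟨?_, fun ⟨hik, hkj⟩ => ⟨k, hik, hkj, rfl⟩⟩
  rintro ⟨l, hil, hlj, hlk⟩
  obtain rfl := h.injOn (hlj.trans hj) hk hlk
  exact ⟨hil, hlj⟩

theorem card_seg (h : IsPathSeq G p n) (hj : j ≤ n) : #(seg p i j) = j + 1 - i := by
  rw [seg, card_image_of_injOn, Nat.card_Icc]
  exact h.injOn.mono fun k hk => (mem_Icc.1 hk).2.trans hj

theorem pathOn_seg (h : IsPathSeq G p n) (hij : i ≤ j) (hj : j ≤ n) :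
    PathOn G (seg p i j) (p i) (p j) := by
  induction j, hij using Nat.le_induction with
  | base => simpa [seg] using PathOn.single (p i)
  | succ k hik ih =>
    have hseg : seg p i (k + 1) = insert (p (k + 1)) (seg p i k) := by
      rw [seg, seg, ← image_insert]
      congr 1
      grind
    rw [hseg]
    refine (ih (by lia)).snoc (h.adj k (by lia)) fun hmem => ?_
    have := (h.mem_seg_iff (by lia) hj).1 hmem
    lia

end IsPathSeq

end PathSeq

section Links

variable {V : Type*} {G : SimpleGraph V} {S T P Q X Y Y' : Finset V} {x x₀ y y₀ z : V}

/-- Deleting a vertex never separates two others. Unlike 2-connectedness, this allows graphs with at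
most two vertices. -/
def NoCutVertex {V : Type*} (G : SimpleGraph V) : Prop :=
  ∀ c : V, (G.induce {c}ᶜ).Preconnected

theorem KConnected.noCutVertex [Fintype V] (h : KConnected 2 G) : NoCutVertex G := fun c =>
  coe_singleton c ▸ (h.2 {c} (by simp)).preconnected

theorem NoCutVertex.exists_pathOn {c : V} (h : NoCutVertex G) (hx : x ≠ c) (hy : y ≠ c) :
    ∃ S, PathOn G S x y ∧ c ∉ S := by
  obtain ⟨S, hS, hSc⟩ := PathOn.exists_of_preconnected_induce (h c) hx hy
  exact ⟨S, hS, fun hc => hSc (mem_coe.2 hc) rfl⟩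

/-- `S` is the vertex set of an `X`–`Y` path from `x` to `y`: only its first vertex lies in `X` and
only its last vertex lies in `Y`. -/
structure LinkOn {V : Type*} (G : SimpleGraph V) (X Y S : Finset V) (x y : V) : Prop where
  pathOn : PathOn G S x y
  left_mem : x ∈ X
  right_mem : y ∈ Y
  eq_left : ∀ v ∈ S, v ∈ X → v = x
  eq_right : ∀ v ∈ S, v ∈ Y → v = y

theorem LinkOn.mono {X' Y' : Finset V} (h : LinkOn G X' Y' S x y) (hX : X ⊆ X') (hY : Y ⊆ Y')
    (hx : x ∈ X) (hy : y ∈ Y) : LinkOn G X Y S x y :=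
  ⟨h.pathOn, hx, hy, fun v hv hvX => h.eq_left v hv (hX hvX),
    fun v hv hvY => h.eq_right v hv (hY hvY)⟩

theorem PathOn.exists_linkOn (h : PathOn G S x y) (hx : x ∈ X) (hy : y ∈ Y) :
    ∃ T ⊆ S, ∃ x' y', LinkOn G X Y T x' y' := by
  obtain ⟨T, hTS, y', hy', hT, hTY⟩ := h.exists_first_mem hy
  obtain ⟨U, hUT, x', hx', hU, hUX⟩ := hT.symm.exists_first_mem hx
  exact ⟨U, hUT.trans hTS, x', y', hU.symm, hx', hy', hUX, fun v hv => hTY v (hUT hv)⟩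

namespace LinkOn

variable [DecidableEq V]

theorem append (hS : LinkOn G X Y' S x z) (hP : LinkOn G (insert z X) Y P z y) (hPY' : P ⊆ Y')
    (hYY' : Y ⊆ Y') : LinkOn G X Y (S ∪ P) x y where
  pathOn := hS.pathOn.append hP.pathOn fun v hvS hvP => hS.eq_right v hvS (hPY' hvP)
  left_mem := hS.left_mem
  right_mem := hP.right_mem
  eq_left := by grind [hS.eq_left, hP.eq_left, hS.pathOn.right_mem]
  eq_right := by grind [hS.eq_right, hP.eq_right, hP.pathOn.left_mem]

theorem exists_split (h : LinkOn G X Y S x y) (hz : z ∈ S) :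
    ∃ S₁ S₂, LinkOn G X (insert z Y) S₁ x z ∧ LinkOn G (insert z X) Y S₂ z y ∧
      S₁ ∪ S₂ = S ∧ ∀ v ∈ S₁, v ∈ S₂ → v = z := by
  obtain ⟨S₁, S₂, h₁, h₂, rfl, hI⟩ := h.pathOn.exists_split hz
  have hx : x ∈ S₁ := h₁.left_mem
  have hy : y ∈ S₂ := h₂.right_mem
  have hX : ∀ v ∈ S₁ ∪ S₂, v ∈ X → v = x := h.eq_left
  have hY : ∀ v ∈ S₁ ∪ S₂, v ∈ Y → v = y := h.eq_right
  simp only [mem_union, or_imp, forall_and] at hX hY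
  exact ⟨S₁, S₂, ⟨h₁, h.left_mem, by simp, hX.1, by grind⟩,
    ⟨h₂, by simp, h.right_mem, by grind, hY.2⟩, rfl, hI⟩

theorem exists_append_subset {w : V} (hT : LinkOn G X Y' T x w) (hP : LinkOn G (insert z X) Y P z y)
    (hw : w ∈ P) (hwz : w ≠ z) (hPY' : P ⊆ Y') (hYY' : Y ⊆ Y') :
    ∃ P' ⊆ P, z ∉ P' ∧ LinkOn G X Y (T ∪ P') x y := by
  obtain ⟨P₁, P₂, h₁, h₂, rfl, hI⟩ := hP.exists_split hw
  refine ⟨P₂, subset_union_right, fun hz => hwz (hI z h₁.pathOn.left_mem hz).symm,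
    hT.append (h₂.mono ?_ subset_rfl (mem_insert_self w X) h₂.right_mem)
      (subset_union_right.trans hPY') hYY'⟩
  exact insert_subset_insert w (subset_insert z X)

theorem exists_disjoint_extension {Q R : Finset V} {x₁ x₂ w : V}
    (hS : LinkOn G X (Y ∪ Q ∪ R) S x₁ z) (hT : LinkOn G X (Y ∪ Q ∪ R) T x₂ w)
    (hST : Disjoint S T) (hQ : LinkOn G (insert z X) Y Q z y₀)
    (hR : LinkOn G (insert z X) Y R z y) (hQR : ∀ v ∈ Q, v ∈ R → v = z) :
    ∃ S' T' y', Disjoint S' T' ∧ (LinkOn G X Y S' x₁ y₀ ∧ LinkOn G X Y T' x₂ y' ∨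
      LinkOn G X Y S' x₂ y₀ ∧ LinkOn G X Y T' x₁ y') := by
  have hQY : Q ⊆ Y ∪ Q ∪ R := by grind
  have hRY : R ⊆ Y ∪ Q ∪ R := by grind
  have hYY : Y ⊆ Y ∪ Q ∪ R := by grind
  rw [disjoint_left] at hST
  have hwz : w ≠ z := by
    rintro rfl
    exact hST hS.pathOn.right_mem hT.pathOn.right_mem
  have hSz : ∀ v ∈ S, v ∈ Y ∪ Q ∪ R → v = z := hS.eq_right
  have hTw : ∀ v ∈ T, v ∈ Y ∪ Q ∪ R → v = w := hT.eq_right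
  by_cases hwQ : w ∈ Q
  · obtain ⟨P, hPQ, hzP, hTP⟩ := hT.exists_append_subset hQ hwQ hwz hQY hYY
    refine ⟨T ∪ P, S ∪ R, y, ?_, .inr ⟨hTP, hS.append hR hRY hYY⟩⟩
    grind [disjoint_left]
  · have hSQ : LinkOn G X Y (S ∪ Q) x₁ y₀ := hS.append hQ hQY hYY
    by_cases hwR : w ∈ R
    · obtain ⟨P, hPR, hzP, hTP⟩ := hT.exists_append_subset hR hwR hwz hRY hYY
      refine ⟨S ∪ Q, T ∪ P, y, ?_, .inl ⟨hSQ, hTP⟩⟩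
      grind [disjoint_left]
    · refine ⟨S ∪ Q, T, w, ?_, .inl ⟨hSQ, hT.mono subset_rfl hYY hT.left_mem ?_⟩⟩
      · grind [disjoint_left]
      · grind [hT.right_mem]

end LinkOn

/- Menger's theorem for two paths, keeping the ends of a given link. The induction replaces `Y` by
`Y ∪ Q₂ ∪ R`, where `R` leaves `Q` at `z` and `Q₂` is the part of `Q` after `z`. -/
theorem NoCutVertex.exists_disjoint_linkOn (hG : NoCutVertex G) (hX : X.Nontrivial)
    (hY : Y.Nontrivial) (hQ : LinkOn G X Y Q x₀ y₀) :
    ∃ S T x₁ x₂ y₁, Disjoint S T ∧ LinkOn G X Y S x₁ y₀ ∧ LinkOn G X Y T x₂ y₁ ∧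
      (x₁ = x₀ ∨ x₂ = x₀) := by
  classical
  induction hn : #Q using Nat.strong_induction_on generalizing Y Q y₀ with | _ n ih =>
  obtain ⟨x, hx, hxy₀⟩ := hX.exists_ne y₀
  obtain ⟨y, hy, hyy₀⟩ := hY.exists_ne y₀
  obtain ⟨R₀, hR₀, hy₀R₀⟩ := hG.exists_pathOn hxy₀ hyy₀
  obtain ⟨R, hRR₀, z, y', hR⟩ := hR₀.exists_linkOn (mem_union_left Q hx) hy
  have hRz : ∀ v ∈ R, v ∈ X ∪ Q → v = z := hR.eq_left
  by_cases hzQ : z ∈ Q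
  · obtain ⟨Q₁, Q₂, hQ₁, hQ₂, rfl, hI⟩ := hQ.exists_split hzQ
    have hzy₀ : z ≠ y₀ := fun h => hy₀R₀ (hRR₀ (h ▸ hR.pathOn.left_mem))
    have hcard : #Q₁ < n := hn ▸ card_lt_card (by grind [hQ₂.pathOn.right_mem])
    have hQ₁z : ∀ v ∈ Q₁, v ∈ Y ∪ Q₂ ∪ R → v = z := by grind [hQ₁.eq_right]
    have hY' : (Y ∪ Q₂ ∪ R).Nontrivial := hY.mono (by grind)
    obtain ⟨S, T, x₁, x₂, w, hST, hS, hT, hx₀⟩ := ih _ hcard hY'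
      ⟨hQ₁.pathOn, hQ₁.left_mem, by grind [hQ₂.pathOn.left_mem], hQ₁.eq_left, hQ₁z⟩ rfl
    have hR' := hR.mono (X := insert z X) (by grind) subset_rfl (mem_insert_self z X) hR.right_mem
    obtain ⟨S', T', y₁, hST', h | h⟩ := hS.exists_disjoint_extension hT hST hQ₂ hR' (by grind)
    · exact ⟨S', T', x₁, x₂, y₁, hST', h.1, h.2, hx₀⟩
    · exact ⟨S', T', x₂, x₁, y₁, hST', h.1, h.2, hx₀.symm⟩
  · have hzX : z ∈ X := by grind [hR.left_mem]
    refine ⟨Q, R, x₀, z, y', ?_, hQ,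
      hR.mono subset_union_left subset_rfl hzX hR.right_mem, .inl rfl⟩
    grind [disjoint_left]

end Links

section LinkCycles

variable {V : Type*} [DecidableEq V] {G : SimpleGraph V} {S T L M X Y : Finset V} {x₁ x₂ y₁ y₂ : V}

theorem LinkOn.cycleOn_union (hS : LinkOn G X Y S x₁ y₁) (hT : LinkOn G X Y T x₂ y₂)
    (hST : Disjoint S T) (hXY : ∀ v ∈ X, v ∈ Y → v = y₁) (hL : PathOn G L x₁ x₂) (hLX : L ⊆ X)
    (hM : PathOn G M y₁ y₂) (hMY : M ⊆ Y) : CycleOn G (L ∪ T ∪ (S ∪ M)) := by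
  rw [disjoint_left] at hST
  have hx₁ := hS.pathOn.left_mem
  have hy₁ := hS.pathOn.right_mem
  have hx₂ := hT.pathOn.left_mem
  have hy₂ := hT.pathOn.right_mem
  have hSX : ∀ v ∈ S, v ∈ X → v = x₁ := hS.eq_left
  have hSY : ∀ v ∈ S, v ∈ Y → v = y₁ := hS.eq_right
  have hTX : ∀ v ∈ T, v ∈ X → v = x₂ := hT.eq_left
  have hTY : ∀ v ∈ T, v ∈ Y → v = y₂ := hT.eq_right
  have hx₂y₂ : x₂ ≠ y₂ := by grind [hT.left_mem, hT.right_mem]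
  have hcard : 3 ≤ #(L ∪ T ∪ (S ∪ M)) := by
    have : #{x₂, y₁, y₂} = 3 := by rw [card_eq_three]; exact ⟨x₂, y₁, y₂, by grind⟩
    exact this ▸ card_le_card (by grind)
  refine (hL.append hT.pathOn ?_).cycleOn_union (hS.pathOn.append hM ?_) ?_ ?_ hcard
  all_goals grind

end LinkCycles

section Crossings

variable {V : Type*} {G : SimpleGraph V} {p : ℕ → V} {n i j k l m : ℕ}

/-- The chords `p 0 ~ p j` and `p n ~ p i` of the path `p 0, …, p n` cross, that is `i < j`. -/
structure IsCrossing {V : Type*} (G : SimpleGraph V) (p : ℕ → V) (n i j : ℕ) : Prop where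
  lt : i < j
  le : j ≤ n
  adj_zero : G.Adj (p 0) (p j)
  adj_last : G.Adj (p n) (p i)

/-- `C` contains every path neighbour of `p n` and, with one exception each, every path predecessor
of a neighbour of `p 0` and every path successor of a neighbour of `p n`. -/
structure CapturesEnds {V : Type*} (G : SimpleGraph V) (p : ℕ → V) (n : ℕ) (C : Finset V) :
    Prop where
  adj_last : ∀ k ≤ n, G.Adj (p n) (p k) → p k ∈ C
  pred : ∃ i₀, ∀ k < n, k ≠ i₀ → G.Adj (p 0) (p (k + 1)) → p k ∈ C
  succ : ∃ i₁, ∀ k < n, k + 1 ≠ i₁ → G.Adj (p n) (p k) → p (k + 1) ∈ C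

namespace IsPathSeq

section DecidableEq

variable [DecidableEq V]

theorem disjoint_seg (h : IsPathSeq G p n) (hjk : j < k) (hl : l ≤ n) :
    Disjoint (seg p i j) (seg p k l) := by
  rw [disjoint_left]
  intro v hv hv'
  obtain ⟨m, hkm, hml, rfl⟩ := mem_seg.1 hv'
  have hmn := hml.trans hl
  have := (h.mem_seg_iff (by lia) hmn).1 hv
  lia

theorem eq_of_mem_seg (h : IsPathSeq G p n) (hjk : j ≤ k) (hl : l ≤ n) {v : V}
    (hv : v ∈ seg p i j) (hv' : v ∈ seg p k l) : v = p k := by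
  obtain ⟨m, hkm, hml, rfl⟩ := mem_seg.1 hv'
  have hmn := hml.trans hl
  have := (h.mem_seg_iff (by lia) hmn).1 hv
  rw [show m = k by lia]

theorem cycleOn_of_isCrossing (h : IsPathSeq G p n) (hij : IsCrossing G p n i j) (hi : 1 ≤ i) :
    CycleOn G (seg p 0 i ∪ seg p j n) := by
  have hlt := hij.lt
  have hle := hij.le
  have hdisj : Disjoint (seg p 0 i) (seg p j n) := h.disjoint_seg hlt le_rfl
  refine ((h.pathOn_seg i.zero_le (by lia)).symm.append_adj (h.pathOn_seg hle le_rfl)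
    hij.adj_zero hdisj).cycleOn_of_adj hij.adj_last ?_
  rw [card_union_of_disjoint hdisj, h.card_seg (by lia), h.card_seg le_rfl]
  lia

end DecidableEq

theorem exists_cycleOn_of_isCrossing (h : IsPathSeq G p n) (hn : 2 ≤ n)
    (hij : IsCrossing G p n i j) (hgap : j ≤ i + 2) : ∃ C, CycleOn G C ∧ n ≤ #C := by
  classical
  have hlt := hij.lt
  have hle := hij.le
  rcases Nat.eq_zero_or_pos i with rfl | hi
  · have hcard : #(seg p 0 n) = n + 1 := h.card_seg le_rfl
    exact ⟨_, (h.pathOn_seg n.zero_le le_rfl).cycleOn_of_adj hij.adj_last (by lia), by lia⟩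
  · refine ⟨_, h.cycleOn_of_isCrossing hij hi, ?_⟩
    rw [card_union_of_disjoint (h.disjoint_seg hlt le_rfl), h.card_seg (by lia), h.card_seg le_rfl]
    lia

theorem exists_capturesEnds_of_isCrossing (h : IsPathSeq G p n) (hij : IsCrossing G p n i j)
    (hgap : ∀ i j, IsCrossing G p n i j → i + 2 < j) :
    ∃ C, CycleOn G C ∧ CapturesEnds G p n C := by
  classical
  induction hd : j - i using Nat.strong_induction_on generalizing i j with | _ d ih =>
  have hlt := hij.lt
  have hle := hij.le
  by_cases hmin : ∃ i' j', IsCrossing G p n i' j' ∧ j' - i' < j - i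
  · obtain ⟨i', j', hij', hlt'⟩ := hmin
    exact ih _ (hd ▸ hlt') hij' rfl
  push Not at hmin
  have hi : 1 ≤ i := by
    by_contra hi
    obtain rfl : i = 0 := by lia
    have := hgap 0 1 ⟨by lia, by lia, h.adj 0 (by lia), hij.adj_last⟩
    lia
  have hmem : ∀ k ≤ n, k ≤ i ∨ j ≤ k → p k ∈ seg p 0 i ∪ seg p j n := fun k hk hk' => by
    rw [mem_union, h.mem_seg_iff (by lia) hk, h.mem_seg_iff le_rfl hk]
    lia
  refine ⟨_, h.cycleOn_of_isCrossing hij hi, fun k hk hadj => hmem k hk ?_,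
    ⟨j - 1, fun k hk hkj hadj => hmem k hk.le ?_⟩,
    ⟨i + 1, fun k hk hki hadj => hmem (k + 1) hk ?_⟩⟩
  · by_contra! hk'
    have := hmin k j ⟨hk'.2, hle, hij.adj_zero, hadj⟩
    lia
  · by_contra! hk'
    have := hmin i (k + 1) ⟨by lia, by lia, hadj, hij.adj_last⟩
    lia
  · by_contra! hk'
    have := hmin k j ⟨by lia, hle, hij.adj_zero, hadj⟩
    lia

end IsPathSeq

end Crossings

section NoCrossing

variable {V : Type*} {G : SimpleGraph V} {p : ℕ → V} {n i j k l m a b u v : ℕ}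

theorem exists_greatest_le {P : ℕ → Prop} (hk : k ≤ n) (hP : P k) :
    ∃ m ≤ n, P m ∧ ∀ l ≤ n, P l → l ≤ m := by
  classical
  exact ⟨Nat.findGreatest P n, Nat.findGreatest_le n, Nat.findGreatest_spec hk hP,
    fun l hl hPl => Nat.le_findGreatest hl hPl⟩

theorem exists_least {P : ℕ → Prop} (hP : P k) : ∃ m, P m ∧ ∀ l, P l → m ≤ l := by
  classical
  exact ⟨Nat.find ⟨k, hP⟩, Nat.find_spec ⟨k, hP⟩, fun l hl => Nat.find_min' ⟨k, hP⟩ hl⟩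

namespace IsPathSeq

section DecidableEq

variable [DecidableEq V]

theorem exists_pathOn_left (h : IsPathSeq G p n) (ha : a ≤ n) (hadj : G.Adj (p 0) (p a))
    (hu : u < a) : ∃ L ⊆ seg p 0 a, PathOn G L (p u) (p a) ∧
      ∃ i₀, ∀ k < a, k ≠ i₀ → G.Adj (p 0) (p (k + 1)) → p k ∈ L := by
  obtain ⟨j, ⟨huj, hj⟩, hmin⟩ := exists_least (P := fun j => u < j ∧ G.Adj (p 0) (p j)) ⟨hu, hadj⟩
  have hja : j ≤ a := hmin a ⟨hu, hadj⟩
  refine ⟨seg p 0 u ∪ seg p j a, ?_, ((h.pathOn_seg u.zero_le (by lia)).symm.append_adj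
    (h.pathOn_seg hja ha) hj (h.disjoint_seg huj ha)), j - 1, fun k hk hkj hadj => ?_⟩
  · exact union_subset (image_subset_image (Icc_subset_Icc_right hu.le))
      (image_subset_image (Icc_subset_Icc_left j.zero_le))
  · have := hmin (k + 1)
    rw [mem_union, h.mem_seg_iff (by lia) (by lia), h.mem_seg_iff ha (by lia)]
    grind

theorem exists_pathOn_right (h : IsPathSeq G p n) (hadj : G.Adj (p n) (p b))
    (hv : b < v) (hvn : v ≤ n) : ∃ M ⊆ seg p b n, PathOn G M (p b) (p v) ∧
      (∀ k ≤ n, b ≤ k → G.Adj (p n) (p k) → p k ∈ M) ∧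
      ∃ i₁, ∀ k < n, b ≤ k → k + 1 ≠ i₁ → G.Adj (p n) (p k) → p (k + 1) ∈ M := by
  obtain ⟨l, hlv, hl, hmax⟩ : ∃ l ≤ v - 1, G.Adj (p n) (p l) ∧
      ∀ k ≤ v - 1, G.Adj (p n) (p k) → k ≤ l :=
    exists_greatest_le (P := fun l => G.Adj (p n) (p l)) (by lia : b ≤ v - 1) hadj
  have hbl : b ≤ l := hmax b (by lia) hadj
  have hmem : ∀ k ≤ n, b ≤ k → k ≤ l ∨ v ≤ k → p k ∈ seg p b l ∪ seg p v n := fun k hk hbk => by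
    rw [mem_union, h.mem_seg_iff (by lia) hk, h.mem_seg_iff le_rfl hk]
    lia
  refine ⟨seg p b l ∪ seg p v n, ?_, ((h.pathOn_seg hbl (by lia)).append_adj
    (h.pathOn_seg hvn le_rfl).symm hl.symm (h.disjoint_seg (by lia) le_rfl)), ?_, l + 1, ?_⟩
  · exact union_subset (image_subset_image (Icc_subset_Icc_right (by lia)))
      (image_subset_image (Icc_subset_Icc_left hv.le))
  · intro k hk hbk hadj
    have := hmax k
    exact hmem k hk hbk (by grind)
  · intro k hk hbk hkl hadj
    have := hmax k
    exact hmem (k + 1) hk (by lia) (by grind)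

theorem linkOn_seg (h : IsPathSeq G p n) (hab : a ≤ b) (hb : b ≤ n) :
    LinkOn G (seg p 0 a) (seg p b n) (seg p a b) (p a) (p b) where
  pathOn := h.pathOn_seg hab hb
  left_mem := (h.mem_seg_iff (hab.trans hb) (hab.trans hb)).2 ⟨a.zero_le, le_rfl⟩
  right_mem := (h.mem_seg_iff le_rfl hb).2 ⟨le_rfl, hb⟩
  eq_left _ hv hva := h.eq_of_mem_seg le_rfl hb hva hv
  eq_right _ hv hvb := h.eq_of_mem_seg le_rfl le_rfl hv hvb

theorem seg_nontrivial (h : IsPathSeq G p n) (hij : i < j) (hj : j ≤ n) :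
    (seg p i j).Nontrivial := by
  rw [← one_lt_card_iff_nontrivial, h.card_seg hj]
  lia

theorem exists_disjoint_linkOn_seg (h : IsPathSeq G p n) (hG : NoCutVertex G) (ha : 0 < a)
    (hab : a ≤ b) (hb : b < n) :
    ∃ S T x₁ x₂ v, Disjoint S T ∧ LinkOn G (seg p 0 a) (seg p b n) S x₁ (p b) ∧
      LinkOn G (seg p 0 a) (seg p b n) T x₂ (p v) ∧ b < v ∧ v ≤ n ∧
      ∃ u < a, (x₁ = p a ∧ x₂ = p u ∨ x₁ = p u ∧ x₂ = p a) := by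
  obtain ⟨S, T, x₁, x₂, y₁, hST, hS, hT, hx⟩ := hG.exists_disjoint_linkOn
    (h.seg_nontrivial ha (by lia)) (h.seg_nontrivial hb le_rfl) (h.linkOn_seg hab hb.le)
  obtain ⟨v, hbv, hvn, rfl⟩ := mem_seg.1 hT.right_mem
  obtain ⟨u₁, -, hu₁, rfl⟩ := mem_seg.1 hS.left_mem
  obtain ⟨u₂, -, hu₂, rfl⟩ := mem_seg.1 hT.left_mem
  rw [disjoint_left] at hST
  have hu : u₁ ≠ u₂ := fun h => hST hS.pathOn.left_mem (h ▸ hT.pathOn.left_mem)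
  have hv : b ≠ v := fun h => hST hS.pathOn.right_mem (h ▸ hT.pathOn.right_mem)
  refine ⟨S, T, _, _, v, disjoint_left.2 hST, hS, hT, by lia, hvn, ?_⟩
  rcases hx with hx | hx
  · have := h.injOn (show u₁ ≤ n by lia) (show a ≤ n by lia) hx
    exact ⟨u₂, by lia, .inl ⟨hx, rfl⟩⟩
  · have := h.injOn (show u₂ ≤ n by lia) (show a ≤ n by lia) hx
    exact ⟨u₁, by lia, .inr ⟨rfl, hx⟩⟩

end DecidableEq

theorem exists_capturesEnds_of_forall_not_isCrossing (h : IsPathSeq G p n) (hG : NoCutVertex G)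
    (hn : 1 ≤ n) (hcross : ∀ i j, ¬IsCrossing G p n i j) :
    ∃ C, CycleOn G C ∧ CapturesEnds G p n C := by
  classical
  obtain ⟨a, han, ha, hamax⟩ := exists_greatest_le (P := fun a => G.Adj (p 0) (p a)) hn (h.adj 0 hn)
  have hlast : G.Adj (p n) (p (n - 1)) := by
    simpa [Nat.sub_add_cancel hn] using (h.adj (n - 1) (by lia)).symm
  obtain ⟨b, hb, hbmin⟩ := exists_least (P := fun b => G.Adj (p n) (p b)) hlast
  have ha₁ : 1 ≤ a := hamax 1 hn (h.adj 0 hn)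
  have hbn : b ≤ n - 1 := hbmin _ hlast
  have hab : a ≤ b := not_lt.1 fun hba => hcross b a ⟨hba, han, ha, hb⟩
  obtain ⟨S, T, x₁, x₂, v, hST, hS, hT, hbv, hvn, u, hu, hx⟩ :=
    h.exists_disjoint_linkOn_seg hG ha₁ hab (by lia : b < n)
  obtain ⟨L, hLX, hL, i₀, hL₀⟩ := h.exists_pathOn_left han ha hu
  obtain ⟨M, hMY, hM, hMn, i₁, hM₁⟩ := h.exists_pathOn_right hb hbv hvn
  have hL' : PathOn G L x₁ x₂ := by
    rcases hx with ⟨rfl, rfl⟩ | ⟨rfl, rfl⟩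
    exacts [hL.symm, hL]
  refine ⟨_, hS.cycleOn_union hT hST (fun v hv hv' => h.eq_of_mem_seg hab le_rfl hv hv')
    hL' hLX hM hMY, fun k hk hadj => ?_, ⟨i₀, fun k hk hki hadj => ?_⟩,
    ⟨i₁, fun k hk hki hadj => ?_⟩⟩
  · grind
  · have := hL₀ k (hamax (k + 1) hk hadj) hki hadj
    grind
  · have := hM₁ k hk (hbmin k hadj) hki hadj
    grind

theorem exists_cycleOn_long_or_capturesEnds (h : IsPathSeq G p n) (hG : NoCutVertex G)
    (hn : 2 ≤ n) : (∃ C, CycleOn G C ∧ n ≤ #C) ∨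
      ((∀ i j, IsCrossing G p n i j → i + 2 < j) ∧ ∃ C, CycleOn G C ∧ CapturesEnds G p n C) := by
  by_cases hclose : ∃ i j, IsCrossing G p n i j ∧ j ≤ i + 2
  · obtain ⟨i, j, hij, hgap⟩ := hclose
    exact .inl (h.exists_cycleOn_of_isCrossing hn hij hgap)
  push Not at hclose
  refine .inr ⟨hclose, ?_⟩
  by_cases hcross : ∃ i j, IsCrossing G p n i j
  · obtain ⟨i, j, hij⟩ := hcross
    exact h.exists_capturesEnds_of_isCrossing hij hclose
  · push Not at hcross
    exact h.exists_capturesEnds_of_forall_not_isCrossing hG (by lia) hcross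

end IsPathSeq

end NoCrossing

section Counting

variable {V : Type*} {G : SimpleGraph V} [G.LocallyFinite] {A C S : Finset V}
  {p : ℕ → V} {n : ℕ} {x y : V}

theorem degree_le_card_filter_range [DecidableRel G.Adj] {q : ℕ → V}
    (hq : ∀ v, G.Adj x v → ∃ k < n, q k = v) : G.degree x ≤ #{k ∈ range n | G.Adj x (q k)} := by
  rw [← G.card_neighborFinset_eq_degree]
  refine card_le_card_of_surjOn q fun v hv => ?_
  have hv : G.Adj x v := by simpa using hv
  obtain ⟨k, hk, rfl⟩ := hq v hv
  exact ⟨k, by simpa using ⟨hk, hv⟩, rfl⟩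

section DecidableEq

variable [DecidableEq V]

theorem degree_zero_le [DecidableRel G.Adj] (hN : ∀ v, G.Adj (p 0) v → v ∈ seg p 0 n) :
    G.degree (p 0) ≤ #{k ∈ range n | G.Adj (p 0) (p (k + 1))} := by
  refine degree_le_card_filter_range (q := fun k => p (k + 1)) fun v hv => ?_
  obtain ⟨k, -, hk, rfl⟩ := mem_seg.1 (hN v hv)
  obtain ⟨k, rfl⟩ := Nat.exists_eq_succ_of_ne_zero (n := k) (by rintro rfl; exact hv.ne rfl)
  exact ⟨k, hk, rfl⟩

theorem degree_last_le [DecidableRel G.Adj] (hN : ∀ v, G.Adj (p n) v → v ∈ seg p 0 n) :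
    G.degree (p n) ≤ #{k ∈ range n | G.Adj (p n) (p k)} := by
  refine degree_le_card_filter_range fun v hv => ?_
  obtain ⟨k, -, hk, rfl⟩ := mem_seg.1 (hN v hv)
  exact ⟨k, lt_of_le_of_ne hk (by rintro rfl; exact hv.ne rfl), rfl⟩

namespace CapturesEnds

theorem exists_pred (hC : CapturesEnds G p n C) (h : IsPathSeq G p n)
    (hG : G.IsBipartiteWith ↑A (↑A)ᶜ) (hx : p 0 ∈ A) (hN : ∀ v, G.Adj (p 0) v → v ∈ seg p 0 n) :
    ∃ I : Finset ℕ, G.degree (p 0) ≤ #I + 1 ∧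
      ∀ k ∈ I, k < n ∧ G.Adj (p 0) (p (k + 1)) ∧ p k ∈ C ∩ A := by
  classical
  obtain ⟨i₀, hi₀⟩ := hC.pred
  refine ⟨{k ∈ range n | G.Adj (p 0) (p (k + 1))}.erase i₀, (degree_zero_le hN).trans ?_,
    fun k hk => ?_⟩
  · exact Nat.sub_le_iff_le_add.1 pred_card_le_card_erase
  · simp only [mem_erase, mem_filter, mem_range] at hk
    obtain ⟨hk, hkn, hadj⟩ := hk
    have := mem_iff_notMem_of_adj hG hadj
    have := mem_iff_notMem_of_adj hG (h.adj k hkn)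
    exact ⟨hkn, hadj, mem_inter.2 ⟨hi₀ k hkn hk hadj, by tauto⟩⟩

theorem exists_adj_last (hC : CapturesEnds G p n C) (hG : G.IsBipartiteWith ↑A (↑A)ᶜ)
    (hy : p n ∉ A) (hN : ∀ v, G.Adj (p n) v → v ∈ seg p 0 n) :
    ∃ J : Finset ℕ, G.degree (p n) ≤ #J ∧
      ∀ k ∈ J, k < n ∧ G.Adj (p n) (p k) ∧ p k ∈ C ∩ A := by
  classical
  refine ⟨{k ∈ range n | G.Adj (p n) (p k)}, degree_last_le hN, fun k hk => ?_⟩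
  simp only [mem_filter, mem_range] at hk
  have := mem_iff_notMem_of_adj hG hk.2
  exact ⟨hk.1, hk.2, mem_inter.2 ⟨hC.adj_last k hk.1.le hk.2, by tauto⟩⟩

theorem exists_succ (hC : CapturesEnds G p n C) (h : IsPathSeq G p n)
    (hG : G.IsBipartiteWith ↑A (↑A)ᶜ) (hy : p n ∈ A) (hN : ∀ v, G.Adj (p n) v → v ∈ seg p 0 n) :
    ∃ J : Finset ℕ, G.degree (p n) ≤ #J + 1 ∧
      ∀ k ∈ J, ∃ l < n, k = l + 1 ∧ G.Adj (p n) (p l) ∧ p k ∈ C ∩ A := by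
  classical
  obtain ⟨i₁, hi₁⟩ := hC.succ
  refine ⟨({l ∈ range n | G.Adj (p n) (p l)}.image (· + 1)).erase i₁,
    (degree_last_le hN).trans ?_, fun k hk => ?_⟩
  · rw [← card_image_of_injective {l ∈ range n | G.Adj (p n) (p l)} (add_left_injective 1)]
    exact Nat.sub_le_iff_le_add.1 pred_card_le_card_erase
  · simp only [mem_erase, mem_image, mem_filter, mem_range] at hk
    obtain ⟨hk, l, ⟨hln, hadj⟩, rfl⟩ := hk
    have := mem_iff_notMem_of_adj hG hadj
    have := mem_iff_notMem_of_adj hG (h.adj l hln)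
    exact ⟨l, hln, rfl, hadj, mem_inter.2 ⟨hi₁ l hln hk hadj, by tauto⟩⟩

theorem degree_add_degree_le_of_notMem (hC : CapturesEnds G p n C) (h : IsPathSeq G p n)
    (hG : G.IsBipartiteWith ↑A (↑A)ᶜ) (hcross : ∀ i j, IsCrossing G p n i j → i + 2 < j)
    (hx : p 0 ∈ A) (hy : p n ∉ A) (hN₀ : ∀ v, G.Adj (p 0) v → v ∈ seg p 0 n)
    (hNₙ : ∀ v, G.Adj (p n) v → v ∈ seg p 0 n) :
    G.degree (p 0) + G.degree (p n) ≤ #(C ∩ A) + 1 := by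
  obtain ⟨I, hdegI, hI⟩ := hC.exists_pred h hG hx hN₀
  obtain ⟨J, hdegJ, hJ⟩ := hC.exists_adj_last hG hy hNₙ
  have hIJ : Disjoint I J := disjoint_left.2 fun k hkI hkJ => by
    obtain ⟨hkn, hadj₀, -⟩ := hI k hkI
    have := hcross k (k + 1) ⟨by lia, hkn, hadj₀, (hJ k hkJ).2.1⟩
    lia
  have := h.card_add_card_le hIJ (fun k hk => ⟨(hI k hk).1.le, (hI k hk).2.2⟩)
    fun k hk => ⟨(hJ k hk).1.le, (hJ k hk).2.2⟩
  lia

theorem degree_add_degree_le_of_mem (hC : CapturesEnds G p n C) (h : IsPathSeq G p n)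
    (hG : G.IsBipartiteWith ↑A (↑A)ᶜ) (hcross : ∀ i j, IsCrossing G p n i j → i + 2 < j)
    (hx : p 0 ∈ A) (hy : p n ∈ A) (hN₀ : ∀ v, G.Adj (p 0) v → v ∈ seg p 0 n)
    (hNₙ : ∀ v, G.Adj (p n) v → v ∈ seg p 0 n) :
    G.degree (p 0) + G.degree (p n) ≤ #(C ∩ A) + 2 := by
  obtain ⟨I, hdegI, hI⟩ := hC.exists_pred h hG hx hN₀
  obtain ⟨J, hdegJ, hJ⟩ := hC.exists_succ h hG hy hNₙ
  have hIJ : Disjoint I J := disjoint_left.2 fun k hkI hkJ => by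
    obtain ⟨hkn, hadj₀, -⟩ := hI k hkI
    obtain ⟨l, -, rfl, hadjₙ, -⟩ := hJ k hkJ
    have := hcross l (l + 2) ⟨by lia, hkn, hadj₀, hadjₙ⟩
    lia
  have := h.card_add_card_le hIJ (fun k hk => ⟨(hI k hk).1.le, (hI k hk).2.2⟩) fun k hk => by
    obtain ⟨l, hln, rfl, -, hmem⟩ := hJ k hk
    exact ⟨hln, hmem⟩
  lia

end CapturesEnds

end DecidableEq

theorem PathOn.exists_cycleOn_of_mem (h : PathOn G S x y)
    (hG : G.IsBipartiteWith ↑A (↑A)ᶜ) (hconn : NoCutVertex G) (hdeg : ∀ v, 2 ≤ G.degree v)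
    (hx : x ∈ A) (hNx : ∀ v, G.Adj x v → v ∈ S) (hNy : ∀ v, G.Adj y v → v ∈ S) :
    ∃ C, CycleOn G C ∧ (#S ≤ #C + 1 ∨
      (y ∉ A ∧ 2 * (G.degree x + G.degree y - 1) ≤ #C) ∨
      (y ∈ A ∧ 2 * (G.degree x + G.degree y - 2) ≤ #C)) := by
  classical
  obtain ⟨p, n, hp, rfl, rfl, rfl⟩ := h.exists_isPathSeq
  have hn : 2 ≤ n := by
    simpa using (hdeg _).trans ((degree_zero_le hNx).trans (card_filter_le _ _))
  obtain ⟨C, hC, hle⟩ | ⟨hcross, C, hC, hends⟩ := hp.exists_cycleOn_long_or_capturesEnds hconn hn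
  · exact ⟨C, hC, .inl (by rw [hp.card_seg le_rfl]; lia)⟩
  · refine ⟨C, hC, .inr ?_⟩
    rw [hC.card_eq hG]
    by_cases hy : p n ∈ A
    · have := hends.degree_add_degree_le_of_mem hp hG hcross hx hy hNx hNy
      exact .inr ⟨hy, by lia⟩
    · have := hends.degree_add_degree_le_of_notMem hp hG hcross hx hy hNx hNy
      exact .inl ⟨hy, by lia⟩

end Counting

section Components

variable {V : Type*} {G : SimpleGraph V} {A C H S : Finset V} {r x y : V}

/-- `C` is the vertex set of a connected component of the subgraph induced by `H`. -/
structure IsComponentIn {V : Type*} (G : SimpleGraph V) (H C : Finset V) : Prop where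
  subset : C ⊆ H
  connected : (G.induce (C : Set V)).Connected
  closed : ∀ u ∈ C, ∀ v ∈ H, G.Adj u v → v ∈ C

theorem IsComponentIn.exists_adj_of_notMem (hC : IsComponentIn G H C) (hS : PathOn G S x y)
    (hx : x ∉ C) (hy : y ∈ C) : ∃ u ∈ S, u ∉ H ∧ ∃ v ∈ C, G.Adj u v := by
  obtain ⟨u, hu, v, -, huC, hvC, huv⟩ := hS.exists_adj_boundary hx hy
  exact ⟨u, hu, fun huH => huC (hC.closed v hvC u huH huv.symm), v, hvC, huv⟩

theorem exists_isComponentIn (hH : H.Nonempty) : ∃ C, IsComponentIn G H C := by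
  classical
  obtain ⟨x, hx⟩ := hH
  have hsingleton (v : V) : (G.induce (({v} : Finset V) : Set V)).Connected := by
    rw [coe_singleton]
    exact .of_subsingleton
  obtain ⟨C, hC⟩ := exists_maximal
    (s := H.powerset.filter fun C : Finset V => (G.induce (C : Set V)).Connected)
    ⟨{x}, mem_filter.2 ⟨by simpa using hx, hsingleton x⟩⟩
  obtain ⟨hCH, hconn⟩ := mem_filter.1 hC.prop
  rw [mem_powerset] at hCH
  refine ⟨C, hCH, hconn, fun u hu v hv huv => ?_⟩
  have hconn' := G.connected_induce_union hconn.preconnected (hsingleton v).preconnected hu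
    (mem_singleton_self v) huv
  rw [← coe_union] at hconn'
  exact hC.le_of_ge (mem_filter.2 ⟨mem_powerset.2 (union_subset hCH (by simpa using hv)), hconn'⟩)
    subset_union_left (by simp)

variable [DecidableEq V]

theorem exists_isComponentIn_le_excess {θ : ℤ} (hθ : θ ≤ 1) (hH : H.Nonempty)
    (hex : θ ≤ excess A H) : ∃ C, IsComponentIn G H C ∧ θ ≤ excess A C := by
  induction H using Finset.strongInduction with
  | H H ih =>
    obtain ⟨C, hC⟩ := exists_isComponentIn (G := G) hH
    by_cases hexC : θ ≤ excess A C
    · exact ⟨C, hC, hexC⟩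
    have hCne : C.Nonempty := nonempty_coe_sort.1 hC.connected.nonempty
    have hsplit : excess A (H \ C) + excess A C = excess A H := by
      rw [← excess_union sdiff_disjoint, sdiff_union_of_subset hC.subset]
    obtain ⟨D, hD, hexD⟩ := ih _ (sdiff_ssubset hC.subset hCne)
      (nonempty_of_excess_pos (A := A) (by lia)) (by lia)
    refine ⟨D, ⟨hD.subset.trans sdiff_subset, hD.connected, fun u hu v hv huv => ?_⟩, hexD⟩
    have huHC := mem_sdiff.1 (hD.subset hu)
    exact hD.closed u hu v
      (mem_sdiff.2 ⟨hv, fun hvC => huHC.2 (hC.closed v hvC u huHC.1 huv.symm)⟩) huv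

/- Depth-first search: after leaving `r`, continue in a component of `H \ {r}` in which `A` is
still sufficiently well represented. -/
theorem exists_pathOn_forall_adj_mem (hG : G.IsBipartiteWith ↑A (↑A)ᶜ)
    (hH : (G.induce (H : Set V)).Preconnected) (hr : r ∈ H)
    (hex : (if r ∈ A then 1 else 0) ≤ excess A H) :
    ∃ a ∈ A, ∃ S ⊆ H, PathOn G S r a ∧ ∀ v ∈ H, G.Adj a v → v ∈ S := by
  induction H using Finset.strongInduction generalizing r with
  | H H ih =>
    have hsplit : excess A H = (if r ∈ A then 1 else -1) + excess A (H.erase r) := by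
      rw [← excess_singleton, ← excess_insert (notMem_erase r H), insert_erase hr]
    obtain hE | hE := (H.erase r).eq_empty_or_nonempty
    · have hHr : H = {r} := by rw [← insert_erase hr, hE, insert_empty]
      have := excess_empty (A := A)
      refine ⟨r, by grind, {r}, by simp [hHr], .single r, fun v hv _ => hHr ▸ hv⟩
    obtain ⟨C, hC, hexC⟩ : ∃ C, IsComponentIn G (H.erase r) C ∧
        (if r ∈ A then 0 else 1) ≤ excess A C :=
      exists_isComponentIn_le_excess (by grind) hE (by grind)
    have hrC : r ∉ C := fun h => notMem_erase r H (hC.subset h)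
    have hCH : C ⊆ H := hC.subset.trans (erase_subset r H)
    obtain ⟨⟨c, hc⟩⟩ := hC.connected.nonempty
    obtain ⟨T, hT, hTH⟩ := PathOn.exists_of_preconnected_induce hH hr (hCH hc)
    obtain ⟨u, hu, huE, v, hv, huv⟩ := hC.exists_adj_of_notMem hT hrC hc
    obtain rfl : u = r := by_contra fun hur => huE (mem_erase.2 ⟨hur, hTH hu⟩)
    have hmem := mem_iff_notMem_of_adj hG huv
    obtain ⟨a, ha, S, hSC, hS, hN⟩ := ih C (ssubset_of_subset_of_ne hCH fun h => hrC (h ▸ hr))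
      hC.connected.preconnected hv (by grind)
    refine ⟨a, ha, insert u S, insert_subset hr (hSC.trans hCH),
      hS.cons huv fun h => hrC (hSC h), fun w hw haw => ?_⟩
    obtain rfl | hwu := eq_or_ne w u
    · exact mem_insert_self w S
    · exact mem_insert_of_mem
        (hN w (hC.closed a (hSC hS.right_mem) w (mem_erase.2 ⟨hwu, hw⟩) haw) haw)

end Components

section LongestPath

variable {V : Type*} {G : SimpleGraph V} {A C S : Finset V} {b x y v : V}

/-- `S` is the vertex set of a longest path of `G`, running from `x` to `y`. -/
structure LongestPathOn {V : Type*} (G : SimpleGraph V) (S : Finset V) (x y : V) : Prop where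
  pathOn : PathOn G S x y
  card_le : ∀ T u v, PathOn G T u v → #T ≤ #S

namespace LongestPathOn

theorem symm (h : LongestPathOn G S x y) : LongestPathOn G S y x :=
  ⟨h.pathOn.symm, h.card_le⟩

theorem mem_of_adj_left (h : LongestPathOn G S x y) (hxv : G.Adj x v) : v ∈ S := by
  classical
  by_contra hv
  have := h.card_le _ _ _ (h.pathOn.cons hxv.symm hv)
  rw [card_insert_of_notMem hv] at this
  lia

theorem mem_of_adj_right (h : LongestPathOn G S x y) (hyv : G.Adj y v) : v ∈ S :=
  h.symm.mem_of_adj_left hyv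

theorem exists_of_cycleOn (h : LongestPathOn G S x y) (hconn : G.Preconnected)
    (hG : G.IsBipartiteWith ↑A (↑A)ᶜ) (hC : CycleOn G C) (hSC : #S ≤ #C + 1) (hbC : b ∉ C)
    (hb : b ∉ A) : ∃ T w, w ∉ A ∧ LongestPathOn G T w b := by
  classical
  obtain ⟨z, hz⟩ : C.Nonempty := card_pos.1 (by have := hC.three_le_card; lia)
  obtain ⟨J', hJ'⟩ := PathOn.exists_of_preconnected hconn b z
  obtain ⟨J, -, u, hu, hJ, hJC⟩ := hJ'.exists_first_mem hz
  obtain ⟨w, hw, -⟩ := hC.exists_open hu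
  have hT : PathOn G (C ∪ J) w b := hw.append hJ.symm fun v hvC hvJ => hJC v hvJ hvC
  have hlt : #C < #(C ∪ J) := card_lt_card (ssubset_of_subset_of_ne subset_union_left
    fun heq => hbC (heq ▸ mem_union_right C hJ.left_mem))
  have hodd : Odd #(C ∪ J) := by
    have hle := h.card_le _ _ _ hT
    have := hC.card_eq hG
    exact ⟨#(C ∩ A), by lia⟩
  exact ⟨C ∪ J, w, fun hwA => hb ((hT.mem_iff_mem_of_odd_card hG hodd).1 hwA), hT,
    fun U u v hU => (h.card_le U u v hU).trans (by lia)⟩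

end LongestPathOn

theorem exists_longestPathOn [Finite V] [Nonempty V] (G : SimpleGraph V) :
    ∃ S x y, LongestPathOn G S x y := by
  classical
  have := Fintype.ofFinite V
  obtain ⟨v⟩ := ‹Nonempty V›
  obtain ⟨S, hS, hmax⟩ := exists_max_image {S : Finset V | ∃ x y, PathOn G S x y} card
    ⟨{v}, mem_filter.2 ⟨mem_univ _, v, v, .single v⟩⟩
  obtain ⟨-, x, y, hxy⟩ := mem_filter.1 hS
  exact ⟨S, x, y, hxy, fun T u v hT => hmax T (mem_filter.2 ⟨mem_univ _, u, v, hT⟩)⟩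

end LongestPath

section Pendant

variable {V : Type*} [DecidableEq V] {G : SimpleGraph V} {A F Q W : Finset V} {p : ℕ → V}
  {n c i j k : ℕ} {a r : V}

/-- `Q` is the vertex set of a path from `a` to `r` that is disjoint from the path `p 0, …, p n`,
is attached to it at `p c`, and contains all neighbours of `a` other than those among
`p c, …, p n`. -/
structure IsPendant {V : Type*} [DecidableEq V] (G : SimpleGraph V) (p : ℕ → V) (n c : ℕ)
    (Q : Finset V) (a r : V) : Prop where
  le : c ≤ n
  pathOn : PathOn G Q a r
  adj : G.Adj r (p c)
  disjoint : Disjoint Q (seg p 0 n)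
  mem_of_adj : ∀ v, G.Adj a v → v ∈ Q ∨ v ∈ seg p c n

theorem IsPathSeq.exists_isPendant [Fintype V] (h : IsPathSeq G p n) (hconn : G.Preconnected)
    (hG : G.IsBipartiteWith ↑A (↑A)ᶜ) (hA : 0 ≤ excess A univ) (h₀ : p 0 ∉ A) (hₙ : p n ∉ A) :
    ∃ c Q a r, a ∈ A ∧ IsPendant G p n c Q a r := by
  set S := seg p 0 n with hS
  have hexS := (h.pathOn_seg n.zero_le le_rfl).two_mul_excess hG
  have hsplit := excess_union (A := A) (disjoint_compl_right (a := S))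
  rw [union_compl] at hsplit
  simp only [excess_singleton, h₀, hₙ, if_false, ← hS] at hexS
  obtain ⟨H, hH, hexH⟩ := exists_isComponentIn_le_excess (G := G) (A := A) le_rfl
    (nonempty_of_excess_pos (A := A) (S := Sᶜ) (by lia)) (by lia)
  obtain ⟨⟨z, hz⟩⟩ := hH.connected.nonempty
  have hHS : Disjoint H S := disjoint_left.2 fun v hv => mem_compl.1 (hH.subset hv)
  have hattach : ∃ c, c ≤ n ∧ ∃ r ∈ H, G.Adj r (p c) := by
    obtain ⟨T, hT⟩ := PathOn.exists_of_preconnected hconn (p 0) z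
    obtain ⟨u, -, hu, r, hr, hur⟩ := hH.exists_adj_of_notMem hT
      (fun h0 => disjoint_left.1 hHS h0 (mem_seg.2 ⟨0, le_rfl, n.zero_le, rfl⟩)) hz
    obtain ⟨c, -, hcn, rfl⟩ := mem_seg.1 (notMem_compl.1 hu)
    exact ⟨c, hcn, r, hr, hur.symm⟩
  obtain ⟨c, ⟨hcn, r, hr, hrc⟩, hmin⟩ := exists_least
    (P := fun c => c ≤ n ∧ ∃ r ∈ H, G.Adj r (p c)) hattach.choose_spec
  obtain ⟨a, ha, Q, hQH, hQ, hN⟩ := exists_pathOn_forall_adj_mem hG hH.connected.preconnected hr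
    (by grind)
  refine ⟨c, Q, a, r, ha, hcn, hQ.symm, hrc, hHS.mono_left hQH, fun v hav => ?_⟩
  have haH := hQH hQ.right_mem
  by_cases hv : v ∈ S
  · obtain ⟨k, -, hkn, rfl⟩ := mem_seg.1 hv
    exact .inr (mem_seg.2 ⟨k, hmin k ⟨hkn, a, haH, hav⟩, hkn, rfl⟩)
  · exact .inl (hN v (hH.closed a haH v (mem_compl.2 hv) hav) hav)

namespace IsPendant

theorem disjoint_seg (hQ : IsPendant G p n c Q a r) (hj : j ≤ n) : Disjoint Q (seg p i j) :=
  hQ.disjoint.mono_right (image_subset_image (Icc_subset_Icc i.zero_le hj))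

theorem pathOn_union_seg (hQ : IsPendant G p n c Q a r) (h : IsPathSeq G p n) :
    PathOn G (Q ∪ seg p c n) a (p n) :=
  hQ.pathOn.append_adj (h.pathOn_seg hQ.le le_rfl) hQ.adj (hQ.disjoint_seg le_rfl)

theorem card_add_lt_of_adj_last (hQ : IsPendant G p n c Q a r) (h : IsPathSeq G p n)
    (hmax : LongestPathOn G (seg p 0 n) (p 0) (p n)) (hkc : k < c) (hadj : G.Adj (p n) (p k)) :
    #Q + k < c := by
  have hcn := hQ.le
  have hdisj : Disjoint (Q ∪ seg p c n) (seg p 0 k) :=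
    disjoint_union_left.2 ⟨hQ.disjoint_seg (by lia), (h.disjoint_seg hkc le_rfl).symm⟩
  have hle := hmax.card_le _ _ _ ((hQ.pathOn_union_seg h).append_adj
    (h.pathOn_seg k.zero_le (by lia)).symm hadj hdisj)
  rw [card_union_of_disjoint hdisj, card_union_of_disjoint (hQ.disjoint_seg le_rfl),
    h.card_seg le_rfl, h.card_seg (by lia), h.card_seg le_rfl] at hle
  lia

theorem not_adj_last (hQ : IsPendant G p n c Q a r) (h : IsPathSeq G p n)
    (hmax : LongestPathOn G (seg p 0 n) (p 0) (p n)) (hj : j < n) (haj : G.Adj a (p (j + 1))) :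
    ¬ G.Adj (p n) (p j) := by
  intro hadj
  have ha : Disjoint {a} (seg p 0 n) :=
    hQ.disjoint.mono_left (singleton_subset_iff.2 hQ.pathOn.left_mem)
  have hseg : Disjoint (seg p (j + 1) n) (seg p 0 j) := (h.disjoint_seg (by lia) le_rfl).symm
  have hpath := ((h.pathOn_seg hj le_rfl).append_adj (h.pathOn_seg j.zero_le hj.le).symm hadj hseg)
  have hunion : seg p (j + 1) n ∪ seg p 0 j = seg p 0 n := by
    rw [union_comm, seg, seg, seg, ← image_union]
    congr 1
    grind
  rw [hunion] at hpath
  have hle := hmax.card_le _ _ _ ((PathOn.single a).append_adj hpath haj ha)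
  rw [card_union_of_disjoint ha, card_singleton] at hle
  lia

variable [G.LocallyFinite]

theorem degree_le [DecidableRel G.Adj] (hQ : IsPendant G p n c Q a r)
    (hG : G.IsBipartiteWith ↑A (↑A)ᶜ) (ha : a ∈ A) :
    G.degree a ≤ #(Q \ A) + #{j ∈ Ico c n | G.Adj a (p (j + 1))} + 1 := by
  have hsub : G.neighborFinset a ⊆
      Q \ A ∪ insert (p c) ({j ∈ Ico c n | G.Adj a (p (j + 1))}.image fun j => p (j + 1)) := by
    intro v hv
    rw [SimpleGraph.mem_neighborFinset] at hv
    have hvA := (mem_iff_notMem_of_adj hG hv).1 ha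
    obtain hvQ | hvp := hQ.mem_of_adj v hv
    · exact mem_union_left _ (mem_sdiff.2 ⟨hvQ, hvA⟩)
    · obtain ⟨j, hcj, hjn, rfl⟩ := mem_seg.1 hvp
      obtain rfl | hne := eq_or_ne j c
      · exact mem_union_right _ (mem_insert_self _ _)
      · obtain ⟨j, rfl⟩ := Nat.exists_eq_succ_of_ne_zero (n := j) (by lia)
        exact mem_union_right _ (mem_insert_of_mem
          (mem_image.2 ⟨j, mem_filter.2 ⟨mem_Ico.2 ⟨by lia, hjn⟩, hv⟩, rfl⟩))
  rw [← G.card_neighborFinset_eq_degree, add_assoc]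
  exact (card_le_card hsub).trans ((card_union_le _ _).trans
    (Nat.add_le_add_left ((card_insert_le _ _).trans (Nat.add_le_add_right card_image_le 1)) _))

theorem degree_add_degree_le (hQ : IsPendant G p n c Q a r) (h : IsPathSeq G p n)
    (hmax : LongestPathOn G (seg p 0 n) (p 0) (p n)) (hG : G.IsBipartiteWith ↑A (↑A)ᶜ)
    (ha : a ∈ A) (hₙ : p n ∉ A) (hF : #(Q \ A) ≤ #(F ∩ A)) (hFseg : Disjoint F (seg p c n))
    (hFN : ∀ v ∈ F, ¬ G.Adj (p n) v) (hFW : F ⊆ W) (hsegW : seg p c n ⊆ W)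
    (hNW : ∀ v, G.Adj (p n) v → v ∈ W) : G.degree a + G.degree (p n) ≤ #(W ∩ A) + 1 := by
  classical
  set E : Finset ℕ := {j ∈ Ico c n | G.Adj a (p (j + 1))} with hE
  have hmemE {j} : j ∈ E ↔ (c ≤ j ∧ j < n) ∧ G.Adj a (p (j + 1)) := by simp [hE]
  have hcardE : #(E.image p) = #E :=
    card_image_of_injOn (h.injOn.mono fun j hj => (hmemE.1 hj).1.2.le)
  have hEseg : E.image p ⊆ seg p c n := image_subset_image fun j hj => by
    have := hmemE.1 hj
    exact mem_Icc.2 (by lia)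
  have hEA : E.image p ⊆ A := image_subset_iff.2 fun j hj => by
    obtain ⟨⟨-, hjn⟩, haj⟩ := hmemE.1 hj
    have := mem_iff_notMem_of_adj hG haj
    have := mem_iff_notMem_of_adj hG (h.adj j hjn)
    tauto
  have hEN : Disjoint (E.image p) (G.neighborFinset (p n)) := disjoint_left.2 fun v hv hv' => by
    obtain ⟨j, hj, rfl⟩ := mem_image.1 hv
    obtain ⟨⟨-, hjn⟩, haj⟩ := hmemE.1 hj
    exact hQ.not_adj_last h hmax hjn haj (by simpa using hv')
  have hFE : Disjoint (F ∩ A) (E.image p) := hFseg.mono inter_subset_left hEseg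
  have hFEN : Disjoint (F ∩ A ∪ E.image p) (G.neighborFinset (p n)) :=
    disjoint_union_left.2 ⟨disjoint_left.2 fun v hv hv' =>
      hFN v (mem_inter.1 hv).1 (by simpa using hv'), hEN⟩
  have hNA : G.neighborFinset (p n) ⊆ W ∩ A := fun v hv => by
    rw [SimpleGraph.mem_neighborFinset] at hv
    have := mem_iff_notMem_of_adj hG hv
    exact mem_inter.2 ⟨hNW v hv, by tauto⟩
  have hcard := card_le_card (union_subset (union_subset (inter_subset_inter_right hFW)
    (subset_inter (hEseg.trans hsegW) hEA)) hNA)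
  rw [card_union_of_disjoint hFEN, card_union_of_disjoint hFE, hcardE,
    G.card_neighborFinset_eq_degree] at hcard
  have := hQ.degree_le hG ha
  lia

theorem exists_cycleOn_of_adj_last_lt (hQ : IsPendant G p n c Q a r) (h : IsPathSeq G p n)
    (hmax : LongestPathOn G (seg p 0 n) (p 0) (p n)) (hG : G.IsBipartiteWith ↑A (↑A)ᶜ)
    (ha : a ∈ A) (hₙ : p n ∉ A) (hk : k < c) (hadj : G.Adj (p n) (p k)) :
    ∃ C, CycleOn G C ∧ 2 * (G.degree a + G.degree (p n) - 1) ≤ #C := by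
  obtain ⟨k, ⟨hkc, hnk⟩, hmin⟩ := exists_least (P := fun k => k < c ∧ G.Adj (p n) (p k)) ⟨hk, hadj⟩
  have hcn := hQ.le
  have hlt := hQ.card_add_lt_of_adj_last h hmax hkc hnk
  have hQpos : 0 < #Q := card_pos.2 ⟨a, hQ.pathOn.left_mem⟩
  have hC : CycleOn G (seg p k n) :=
    (h.pathOn_seg (by lia) le_rfl).cycleOn_of_adj hnk (by rw [h.card_seg le_rfl]; lia)
  refine ⟨_, hC, ?_⟩
  rw [hC.card_eq hG]
  set F := seg p (c - #Q) (c - 1) with hF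
  have hcardF : #F = #Q := by rw [hF, h.card_seg (by lia)]; lia
  have hQF : #(Q \ A) ≤ #(F ∩ A) := by
    have := hQ.pathOn.two_mul_card_sdiff_le hG ha
    have := (h.pathOn_seg (i := c - #Q) (j := c - 1) (by lia) (by lia)).card_le hG
    lia
  have := hQ.degree_add_degree_le (W := seg p k n) h hmax hG ha hₙ hQF
    (h.disjoint_seg (by lia) le_rfl)
    (fun v hv hadj => by
      obtain ⟨i, hi, hic, rfl⟩ := mem_seg.1 hv
      have := hQ.card_add_lt_of_adj_last h hmax (by lia) hadj
      lia)
    (image_subset_image (Icc_subset_Icc (by lia) (by lia)))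
    (image_subset_image (Icc_subset_Icc hkc.le le_rfl)) fun v hv => by
      obtain ⟨i, -, hin, rfl⟩ := mem_seg.1 (hmax.mem_of_adj_right hv)
      have := hmin i
      exact mem_seg.2 ⟨i, by grind, hin, rfl⟩
  lia

theorem exists_cycleOn (hQ : IsPendant G p n c Q a r) (h : IsPathSeq G p n)
    (hmax : LongestPathOn G (seg p 0 n) (p 0) (p n)) (hG : G.IsBipartiteWith ↑A (↑A)ᶜ)
    (hconn : NoCutVertex G) (hdeg : ∀ v, 2 ≤ G.degree v) (ha : a ∈ A) (hₙ : p n ∉ A) :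
    ∃ C, CycleOn G C ∧ 2 * (G.degree a + G.degree (p n) - 1) ≤ #C := by
  by_cases hlt : ∃ k < c, G.Adj (p n) (p k)
  · obtain ⟨k, hk, hadj⟩ := hlt
    exact hQ.exists_cycleOn_of_adj_last_lt h hmax hG ha hₙ hk hadj
  have hN : ∀ v, G.Adj (p n) v → v ∈ seg p c n := fun v hv => by
    obtain ⟨i, -, hin, rfl⟩ := mem_seg.1 (hmax.mem_of_adj_right hv)
    exact mem_seg.2 ⟨i, not_lt.1 fun hi => hlt ⟨i, hi, hv⟩, hin, rfl⟩
  have hpath := hQ.pathOn_union_seg h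
  obtain ⟨C, hC, hle⟩ := hpath.exists_cycleOn_of_mem hG hconn hdeg ha
    (fun v hv => mem_union.2 (hQ.mem_of_adj v hv)) fun v hv => mem_union_right _ (hN v hv)
  refine ⟨C, hC, ?_⟩
  obtain hle | ⟨-, hle⟩ | ⟨hn, -⟩ := hle
  · have hQA := hQ.pathOn.two_mul_card_sdiff_le hG ha
    have hsplit := card_inter_add_card_sdiff Q A
    have hdisj := hQ.disjoint_seg (i := c) le_rfl
    have hcount := hQ.degree_add_degree_le h hmax hG ha hₙ (F := Q) (by lia) hdisj
      (fun v hv hadj => disjoint_left.1 hdisj hv (hN v hadj)) subset_union_left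
      subset_union_right fun v hv => mem_union_right _ (hN v hv)
    have hcard := card_add_excess (A := A) (S := Q ∪ seg p c n)
    have hex := hpath.two_mul_excess hG
    simp only [excess_singleton, ha, hₙ, if_true, if_false] at hex
    have := hC.card_eq hG
    lia
  · exact hle
  · exact absurd hn hₙ

end IsPendant

end Pendant

section Main

variable {V : Type*} [Fintype V] {G : SimpleGraph V} {A S : Finset V} {x y : V} {k s t : ℕ}

theorem KConnected.preconnected (h : KConnected k G) (hk : 0 < k) : G.Preconnected := fun x y => by
  obtain ⟨S, ⟨p, -⟩, -⟩ := PathOn.exists_of_preconnected_induce (h.2 ∅ (by simpa)).preconnected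
    (x := x) (y := y) (by simp) (by simp)
  exact p.reachable

variable [DecidableRel G.Adj]

theorem KConnected.two_le_degree (h : KConnected 2 G) (v : V) :
    2 ≤ G.degree v := by
  classical
  have : Nontrivial V := Fintype.one_lt_card_iff_nontrivial.1 (one_lt_two.trans h.1)
  obtain ⟨u, hvu⟩ := (h.preconnected two_pos).exists_adj_of_nontrivial v
  obtain ⟨w, -, hw⟩ := exists_mem_notMem_of_card_lt_card (s := {v, u}) (t := univ)
    (card_le_two.trans_lt h.1)
  simp only [mem_insert, mem_singleton, not_or] at hw
  obtain ⟨T, hT, huT⟩ := h.noCutVertex.exists_pathOn hvu.ne hw.2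
  obtain ⟨T', u', hT', hvu', -, rfl⟩ := hT.exists_uncons (Ne.symm hw.1)
  have huu' : u ≠ u' := by
    rintro rfl
    exact huT (mem_insert_of_mem hT'.left_mem)
  rw [← G.card_neighborFinset_eq_degree, ← card_pair huu']
  exact card_le_card (by grind [SimpleGraph.mem_neighborFinset])

theorem LongestPathOn.exists_cycleOn_of_mem (h : LongestPathOn G S x y) (hconn : KConnected 2 G)
    (hG : G.IsBipartiteWith ↑A (↑A)ᶜ) (hs : ∀ a ∈ A, s ≤ G.degree a)
    (ht : ∀ b ∉ A, t ≤ G.degree b) (hx : x ∈ A) :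
    ∃ C, CycleOn G C ∧ (#S ≤ #C + 1 ∨ 2 * min (s + t - 1) (2 * s - 2) ≤ #C) := by
  obtain ⟨C, hC, hle⟩ := h.pathOn.exists_cycleOn_of_mem hG hconn.noCutVertex hconn.two_le_degree hx
    (fun v => h.mem_of_adj_left) fun v => h.mem_of_adj_right
  have := hs x hx
  have := hs y
  have := ht y
  exact ⟨C, hC, by grind⟩

variable [DecidableEq V]

theorem LongestPathOn.exists_cycleOn_of_notMem (h : LongestPathOn G S x y)
    (hconn : KConnected 2 G) (hG : G.IsBipartiteWith ↑A (↑A)ᶜ) (hA : #Aᶜ ≤ #A) (hx : x ∉ A)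
    (hy : y ∉ A) : ∃ a ∈ A, ∃ C, CycleOn G C ∧ 2 * (G.degree a + G.degree y - 1) ≤ #C := by
  obtain ⟨p, n, hp, rfl, rfl, rfl⟩ := h.pathOn.exists_isPathSeq
  have hex : 0 ≤ excess A univ := by
    rw [excess, univ_inter, ← compl_eq_univ_sdiff]
    lia
  obtain ⟨c, Q, a, r, ha, hQ⟩ :=
    hp.exists_isPendant (hconn.preconnected two_pos) hG hex hx hy
  exact ⟨a, ha, hQ.exists_cycleOn hp h hG hconn.noCutVertex hconn.two_le_degree ha hy⟩

theorem KConnected.exists_cycleOn (hconn : KConnected 2 G) (hG : G.IsBipartiteWith ↑A (↑A)ᶜ)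
    (hA : #Aᶜ ≤ #A) (hs : ∀ a ∈ A, s ≤ G.degree a) (ht : ∀ b ∉ A, t ≤ G.degree b) :
    ∃ C, CycleOn G C ∧ 2 * min #Aᶜ (min (s + t - 1) (2 * s - 2)) ≤ #C := by
  have hends : ∀ {S x y}, LongestPathOn G S x y → x ∉ A → y ∉ A →
      ∃ C, CycleOn G C ∧ 2 * min #Aᶜ (min (s + t - 1) (2 * s - 2)) ≤ #C := fun h hx hy => by
    obtain ⟨a, ha, C, hC, hle⟩ := h.exists_cycleOn_of_notMem hconn hG hA hx hy
    have := hs a ha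
    have := ht _ hy
    exact ⟨C, hC, by lia⟩
  have : Nonempty V := Fintype.card_pos_iff.1 (two_pos.trans hconn.1)
  obtain ⟨S, x, y, h⟩ := exists_longestPathOn G
  by_cases hxy : x ∉ A ∧ y ∉ A
  · exact hends h hxy.1 hxy.2
  obtain ⟨C, hC, hSC | hle⟩ :
      ∃ C, CycleOn G C ∧ (#S ≤ #C + 1 ∨ 2 * min (s + t - 1) (2 * s - 2) ≤ #C) := by
    obtain hx | hy : x ∈ A ∨ y ∈ A := by tauto
    · exact h.exists_cycleOn_of_mem hconn hG hs ht hx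
    · exact h.symm.exists_cycleOn_of_mem hconn hG hs ht hy
  · by_cases hAC : Aᶜ ⊆ C
    · have hcard : #Aᶜ ≤ #(C \ A) := card_le_card fun b hb => mem_sdiff.2 ⟨hAC hb, mem_compl.1 hb⟩
      have := card_inter_add_card_sdiff C A
      have := hC.card_eq hG
      exact ⟨C, hC, by lia⟩
    · obtain ⟨b, hb, hbC⟩ := not_subset.1 hAC
      obtain ⟨T, w, hw, hT⟩ := h.exists_of_cycleOn (hconn.preconnected two_pos) hG hC hSC hbC
        (mem_compl.1 hb)
      exact hends hT hw (mem_compl.1 hb)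
  · exact ⟨C, hC, by lia⟩

end Main

theorem jackson_long_cycle
    {V : Type*} [Fintype V] [DecidableEq V] (G : SimpleGraph V) [DecidableRel G.Adj]
    (hconn : KConnected 2 G)
    (A B : Finset V) (hdisj : Disjoint A B) (hcover : A ∪ B = Finset.univ)
    (hAB : B.card ≤ A.card)
    (hbip : ∀ u v, G.Adj u v → (u ∈ A ∧ v ∈ B) ∨ (u ∈ B ∧ v ∈ A))
    (s t : ℕ) (hs : ∀ a ∈ A, s ≤ G.degree a) (ht : ∀ b ∈ B, t ≤ G.degree b) :
    ∃ (u : V) (c : G.Walk u u), c.IsCycle ∧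
      2 * min B.card (min (s + t - 1) (2 * s - 2)) ≤ c.length := by
  obtain rfl : Aᶜ = B := IsCompl.compl_eq ⟨hdisj, codisjoint_iff.2 hcover⟩
  have hG : G.IsBipartiteWith ↑A (↑A)ᶜ := by
    refine ⟨disjoint_compl_right, fun u v huv => ?_⟩
    simpa using hbip u v huv
  obtain ⟨C, hC, hle⟩ := hconn.exists_cycleOn hG hAB hs fun b hb => ht b (mem_compl.2 hb)
  obtain ⟨u, c, hc, hlen⟩ := hC.exists_walk
  exact ⟨u, c, hc, hlen ▸ hle⟩
end
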